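/- Let A be a C*-algebra and let n = 2k+1 for some integer k ≥ 0. Then A is n-ideally amenable: for every closed two-sided ideal I of A, every bounded derivation from A into the (2k+1)-th dual I^(2k+1) is inner. -/

import Mathlib

/- ## Core definitions: Banach bimodules over (non-unital) complex Banach algebras,
iterated dual modules, derivations, ideal amenability, and Arens extensions. -/

noncomputable section

open ContinuousLinearMap

universe u

/-- The topological dual of a complex normed space. -/
abbrev Dl (X : Type u) [SeminormedAddCommGroup X] [NormedSpace ℂ X] : Type u := X →L[ℂ] ℂ

/-- The canonical embedding of a normed space into its double dual. -/
def inclDD (X : Type u) [SeminormedAddCommGroup X] [NormedSpace ℂ X] : X →L[ℂ] Dl (Dl X) :=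
  ContinuousLinearMap.apply ℂ ℂ

@[simp] lemma inclDD_apply {X : Type u} [SeminormedAddCommGroup X] [NormedSpace ℂ X]
    (x : X) (f : Dl X) : inclDD X x f = f x := rfl

/-- A (bounded) Banach bimodule structure of a complex Banach algebra `A`
on a complex Banach space `X`:  `l a x = a • x` and `r a x = x • a`. -/
structure Bimodule (A : Type u) [NonUnitalNormedRing A] [NormedSpace ℂ A]
    [SMulCommClass ℂ A A] [IsScalarTower ℂ A A]
    (X : Type u) [NormedAddCommGroup X] [NormedSpace ℂ X] : Type u where
  l : A →L[ℂ] X →L[ℂ] X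
  r : A →L[ℂ] X →L[ℂ] X
  l_mul : ∀ a b x, l (a * b) x = l a (l b x)
  r_mul : ∀ a b x, r (a * b) x = r b (r a x)
  lr : ∀ a b x, l a (r b x) = r b (l a x)

variable {A : Type u} [NonUnitalNormedRing A] [NormedSpace ℂ A]
  [SMulCommClass ℂ A A] [IsScalarTower ℂ A A]

/-- The dual module of a Banach bimodule: `(a·f)(x) = f(x·a)` and `(f·a)(x) = f(a·x)`. -/
def Bimodule.dualMod {X : Type u} [NormedAddCommGroup X] [NormedSpace ℂ X]
    (M : Bimodule A X) : Bimodule A (Dl X) where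
  l := ((ContinuousLinearMap.compL ℂ X X ℂ).flip).comp M.r
  r := ((ContinuousLinearMap.compL ℂ X X ℂ).flip).comp M.l
  l_mul := fun a b f => by
    ext x
    simp [M.r_mul]
  r_mul := fun a b f => by
    ext x
    simp [M.l_mul]
  lr := fun a b f => by
    ext x
    simp [M.lr]

@[simp] lemma Bimodule.dualMod_l_apply {X : Type u} [NormedAddCommGroup X] [NormedSpace ℂ X]
    (M : Bimodule A X) (a : A) (f : Dl X) (x : X) :
    M.dualMod.l a f x = f (M.r a x) := by
  simp [Bimodule.dualMod]

@[simp] lemma Bimodule.dualMod_r_apply {X : Type u} [NormedAddCommGroup X] [NormedSpace ℂ X]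
    (M : Bimodule A X) (a : A) (f : Dl X) (x : X) :
    M.dualMod.r a f x = f (M.l a x) := by
  simp [Bimodule.dualMod]

/-- A Banach `A`-bimodule, bundled with its underlying space. -/
structure BMod (A : Type u) [NonUnitalNormedRing A] [NormedSpace ℂ A]
    [SMulCommClass ℂ A A] [IsScalarTower ℂ A A] : Type (u + 1) where
  X : Type u
  [xGroup : NormedAddCommGroup X]
  [xSpace : NormedSpace ℂ X]
  act : Bimodule A X

attribute [instance] BMod.xGroup BMod.xSpace

/-- The dual of a bundled Banach bimodule. -/
def BMod.dualObj (M : BMod A) : BMod A :=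
  ⟨Dl M.X, M.act.dualMod⟩

/-- The `n`-th dual of a bundled Banach bimodule (`iter 0 = M`). -/
def BMod.iter (M : BMod A) : ℕ → BMod A
  | 0 => M
  | n + 1 => (M.iter n).dualObj

/-- A bounded derivation from `A` into the Banach `A`-bimodule `M`. -/
def IsDerivation (M : BMod A) (D : A →L[ℂ] M.X) : Prop :=
  ∀ a b : A, D (a * b) = M.act.l a (D b) + M.act.r b (D a)

/-- An inner derivation.  -/
def IsInner (M : BMod A) (D : A →L[ℂ] M.X) : Prop :=
  ∃ x : M.X, ∀ a : A, D a = M.act.l a x - M.act.r a x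

/-- `H¹(A, M) = {0}` : every bounded derivation into `M` is inner. -/
def H1Zero (M : BMod A) : Prop :=
  ∀ D : A →L[ℂ] M.X, IsDerivation M D → IsInner M D

/-- A closed two-sided ideal of the Banach algebra `A`. -/
structure ClosedIdeal (A : Type u) [NonUnitalNormedRing A] [NormedSpace ℂ A]
    [SMulCommClass ℂ A A] [IsScalarTower ℂ A A] : Type u where
  car : Submodule ℂ A
  isClosed : IsClosed (car : Set A)
  mul_mem_left : ∀ (a x : A), x ∈ car → a * x ∈ car
  mul_mem_right : ∀ (a x : A), x ∈ car → x * a ∈ car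

namespace ClosedIdeal

variable (I : ClosedIdeal A)

/-- Left multiplication action of `A` on a closed two-sided ideal. -/
def lAct : A →L[ℂ] ↥I.car →L[ℂ] ↥I.car :=
  LinearMap.mkContinuous₂
    (LinearMap.mk₂ ℂ
      (fun a x => (⟨a * (x : A), I.mul_mem_left a x x.2⟩ : ↥I.car))
      (fun a b x => Subtype.ext <| by simp [add_mul])
      (fun c a x => Subtype.ext <| by simp [smul_mul_assoc])
      (fun a x y => Subtype.ext <| by simp [mul_add])
      (fun c a x => Subtype.ext <| by simp [mul_smul_comm]))
    1
    (fun a x => by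
      simp only [LinearMap.mk₂_apply, one_mul]
      calc ‖(⟨a * (x : A), I.mul_mem_left a x x.2⟩ : ↥I.car)‖ = ‖a * (x : A)‖ := rfl
        _ ≤ ‖a‖ * ‖(x : A)‖ := norm_mul_le _ _
        _ = ‖a‖ * ‖x‖ := by rw [Submodule.coe_norm])

/-- Right multiplication action of `A` on a closed two-sided ideal. -/
def rAct : A →L[ℂ] ↥I.car →L[ℂ] ↥I.car :=
  LinearMap.mkContinuous₂
    (LinearMap.mk₂ ℂ
      (fun a x => (⟨(x : A) * a, I.mul_mem_right a x x.2⟩ : ↥I.car))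
      (fun a b x => Subtype.ext <| by simp [mul_add])
      (fun c a x => Subtype.ext <| by simp [mul_smul_comm])
      (fun a x y => Subtype.ext <| by simp [add_mul])
      (fun c a x => Subtype.ext <| by simp [smul_mul_assoc]))
    1
    (fun a x => by
      simp only [LinearMap.mk₂_apply, one_mul]
      calc ‖(⟨(x : A) * a, I.mul_mem_right a x x.2⟩ : ↥I.car)‖ = ‖(x : A) * a‖ := rfl
        _ ≤ ‖(x : A)‖ * ‖a‖ := norm_mul_le _ _
        _ = ‖x‖ * ‖a‖ := by rw [Submodule.coe_norm]
        _ = ‖a‖ * ‖x‖ := mul_comm _ _)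

@[simp] lemma lAct_apply (a : A) (x : ↥I.car) : (I.lAct a x : A) = a * (x : A) := rfl
@[simp] lemma rAct_apply (a : A) (x : ↥I.car) : (I.rAct a x : A) = (x : A) * a := rfl

/-- A closed two-sided ideal as a Banach `A`-bimodule. -/
def toBMod : BMod A where
  X := ↥I.car
  act :=
    { l := I.lAct
      r := I.rAct
      l_mul := fun a b x => Subtype.ext <| by simp [mul_assoc]
      r_mul := fun a b x => Subtype.ext <| by simp [mul_assoc]
      lr := fun a b x => Subtype.ext <| by simp [mul_assoc] }

end ClosedIdeal

/-- The Banach algebra `A` as a Banach bimodule over itself. -/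
def regBMod (A : Type u) [NonUnitalNormedRing A] [NormedSpace ℂ A]
    [SMulCommClass ℂ A A] [IsScalarTower ℂ A A] : BMod A where
  X := A
  act :=
    { l := ContinuousLinearMap.mul ℂ A
      r := (ContinuousLinearMap.mul ℂ A).flip
      l_mul := fun a b x => by simp [mul_assoc]
      r_mul := fun a b x => by simp [mul_assoc]
      lr := fun a b x => by simp [mul_assoc] }

/-- `A` is `n`-`I`-weakly amenable: `H¹(A, I⁽ⁿ⁾) = {0}`. -/
def NIWeaklyAmenable (I : ClosedIdeal A) (n : ℕ) : Prop :=
  H1Zero (I.toBMod.iter n)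

/-- `A` is `n`-ideally amenable. -/
def NIdeallyAmenable (A : Type u) [NonUnitalNormedRing A] [NormedSpace ℂ A]
    [SMulCommClass ℂ A A] [IsScalarTower ℂ A A] (n : ℕ) : Prop :=
  ∀ I : ClosedIdeal A, H1Zero (I.toBMod.iter n)

/-- `A` is `n`-weakly amenable: `H¹(A, A⁽ⁿ⁾) = {0}`. -/
def NWeaklyAmenable (A : Type u) [NonUnitalNormedRing A] [NormedSpace ℂ A]
    [SMulCommClass ℂ A A] [IsScalarTower ℂ A A] (n : ℕ) : Prop :=
  H1Zero ((regBMod A).iter n)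

/- ## Arens-type extensions of bounded bilinear maps to biduals -/

section Arens

variable {E F G : Type*}
  [SeminormedAddCommGroup E] [NormedSpace ℂ E]
  [SeminormedAddCommGroup F] [NormedSpace ℂ F]
  [SeminormedAddCommGroup G] [NormedSpace ℂ G]

/-- Auxiliary map for the Arens extension:
`arT b Ψ g = (e ↦ Ψ (g ∘ b e))`. -/
def arT (b : E →L[ℂ] F →L[ℂ] G) (Ψ : Dl (Dl F)) (g : Dl G) : Dl E :=
  LinearMap.mkContinuous
    { toFun := fun e => Ψ (g.comp (b e))
      map_add' := fun e e' => by simp only [map_add, ContinuousLinearMap.comp_add, map_add]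
      map_smul' := fun c e => by
        simp only [map_smul, ContinuousLinearMap.comp_smul, map_smul, RingHom.id_apply] }
    (‖Ψ‖ * ‖g‖ * ‖b‖)
    (fun e => by
      calc ‖Ψ (g.comp (b e))‖ ≤ ‖Ψ‖ * ‖g.comp (b e)‖ := Ψ.le_opNorm _
        _ ≤ ‖Ψ‖ * (‖g‖ * ‖b e‖) := by gcongr; exact g.opNorm_comp_le _
        _ ≤ ‖Ψ‖ * (‖g‖ * (‖b‖ * ‖e‖)) := by gcongr; exact b.le_opNorm e
        _ = ‖Ψ‖ * ‖g‖ * ‖b‖ * ‖e‖ := by ring)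

@[simp] lemma arT_apply (b : E →L[ℂ] F →L[ℂ] G) (Ψ : Dl (Dl F)) (g : Dl G)
    (e : E) : arT b Ψ g e = Ψ (g.comp (b e)) := rfl

lemma arT_add_right (b : E →L[ℂ] F →L[ℂ] G) (Ψ Ψ' : Dl (Dl F)) (g : Dl G) :
    arT b (Ψ + Ψ') g = arT b Ψ g + arT b Ψ' g := by
  ext e; simp

lemma arT_smul_right (b : E →L[ℂ] F →L[ℂ] G) (c : ℂ) (Ψ : Dl (Dl F)) (g : Dl G) :
    arT b (c • Ψ) g = c • arT b Ψ g := by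
  ext e; simp

lemma arT_add_g (b : E →L[ℂ] F →L[ℂ] G) (Ψ : Dl (Dl F)) (g g' : Dl G) :
    arT b Ψ (g + g') = arT b Ψ g + arT b Ψ g' := by
  ext e; simp [ContinuousLinearMap.add_comp]

lemma arT_smul_g (b : E →L[ℂ] F →L[ℂ] G) (c : ℂ) (Ψ : Dl (Dl F)) (g : Dl G) :
    arT b Ψ (c • g) = c • arT b Ψ g := by
  ext e; simp [ContinuousLinearMap.smul_comp]

/-- One half of the Arens extension: `(arExtFun b Φ Ψ) g = Φ (e ↦ Ψ (g ∘ b e))`. -/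
def arExtFun (b : E →L[ℂ] F →L[ℂ] G) (Φ : Dl (Dl E)) (Ψ : Dl (Dl F)) :
    Dl (Dl G) :=
  LinearMap.mkContinuous
    { toFun := fun g => Φ (arT b Ψ g)
      map_add' := fun g g' => by simp only [arT_add_g, map_add]
      map_smul' := fun c g => by simp only [arT_smul_g, map_smul, RingHom.id_apply] }
    (‖Φ‖ * ‖Ψ‖ * ‖b‖)
    (fun g => by
      calc ‖Φ (arT b Ψ g)‖ ≤ ‖Φ‖ * ‖arT b Ψ g‖ := Φ.le_opNorm _
        _ ≤ ‖Φ‖ * (‖Ψ‖ * ‖g‖ * ‖b‖) := by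
            gcongr
            exact LinearMap.mkContinuous_norm_le _ (by positivity) _
        _ = ‖Φ‖ * ‖Ψ‖ * ‖b‖ * ‖g‖ := by ring)

@[simp] lemma arExtFun_apply (b : E →L[ℂ] F →L[ℂ] G) (Φ : Dl (Dl E))
    (Ψ : Dl (Dl F)) (g : Dl G) : arExtFun b Φ Ψ g = Φ (arT b Ψ g) := rfl

lemma arExtFun_norm_le (b : E →L[ℂ] F →L[ℂ] G) (Φ : Dl (Dl E))
    (Ψ : Dl (Dl F)) : ‖arExtFun b Φ Ψ‖ ≤ ‖Φ‖ * ‖Ψ‖ * ‖b‖ :=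
  LinearMap.mkContinuous_norm_le _ (by positivity) _

/-- The (first-)Arens-type extension of a bounded bilinear map `b : E × F → G` to the
biduals, obtained by iterated weak* limits (outer limit in the first variable):
`(arExt b Φ Ψ) g = Φ (e ↦ Ψ (g ∘ b e))`. -/
def arExt (b : E →L[ℂ] F →L[ℂ] G) :
    Dl (Dl E) →L[ℂ] Dl (Dl F) →L[ℂ] Dl (Dl G) :=
  LinearMap.mkContinuous₂
    (LinearMap.mk₂ ℂ (arExtFun b)
      (fun Φ Φ' Ψ => by ext g; simp)
      (fun c Φ Ψ => by ext g; simp)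
      (fun Φ Ψ Ψ' => by ext g; simp [arT_add_right])
      (fun c Φ Ψ => by ext g; simp [arT_smul_right]))
    ‖b‖
    (fun Φ Ψ => by
      simp only [LinearMap.mk₂_apply]
      exact (arExtFun_norm_le b Φ Ψ).trans (le_of_eq (by ring)))

@[simp] lemma arExt_apply (b : E →L[ℂ] F →L[ℂ] G) (Φ : Dl (Dl E))
    (Ψ : Dl (Dl F)) (g : Dl G) : arExt b Φ Ψ g = Φ (arT b Ψ g) := rfl

end Arens

/- ## Arens products and Arens module extensions -/

/-- The first Arens product on the bidual of a Banach algebra. -/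
def arensMul (A : Type u) [NonUnitalNormedRing A] [NormedSpace ℂ A]
    [SMulCommClass ℂ A A] [IsScalarTower ℂ A A] :
    Dl (Dl A) →L[ℂ] Dl (Dl A) →L[ℂ] Dl (Dl A) :=
  arExt (ContinuousLinearMap.mul ℂ A)

/-- The second Arens product on the bidual of a Banach algebra. -/
def arensMul₂ (A : Type u) [NonUnitalNormedRing A] [NormedSpace ℂ A]
    [SMulCommClass ℂ A A] [IsScalarTower ℂ A A]
    (F G : Dl (Dl A)) : Dl (Dl A) :=
  arExt (ContinuousLinearMap.mul ℂ A).flip G F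

namespace Bimodule

variable {X : Type u} [NormedAddCommGroup X] [NormedSpace ℂ X]

/-- First (iterated weak*-limit) extension of the left action:
`a'' · x'' = w*-lim_i lim_j a_i • x_j`. -/
def lExt (M : Bimodule A X) (F : Dl (Dl A)) (ξ : Dl (Dl X)) :
    Dl (Dl X) :=
  arExt M.l F ξ

/-- Second extension of the left action: `a'' · x'' = w*-lim_j lim_i a_i • x_j`. -/
def lExt₂ (M : Bimodule A X) (F : Dl (Dl A)) (ξ : Dl (Dl X)) :
    Dl (Dl X) :=
  arExt M.l.flip ξ F

/-- First (iterated weak*-limit) extension of the right action: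
`x'' · a'' = w*-lim_j lim_i x_j • a_i`. -/
def rExt (M : Bimodule A X) (ξ : Dl (Dl X)) (F : Dl (Dl A)) :
    Dl (Dl X) :=
  arExt M.r.flip ξ F

/-- Second extension of the right action: `x'' · a'' = w*-lim_i lim_j x_j • a_i`. -/
def rExt₂ (M : Bimodule A X) (ξ : Dl (Dl X)) (F : Dl (Dl A)) :
    Dl (Dl X) :=
  arExt M.r F ξ

/-- The topological centre of the right module action of `A` on `X`, i.e. the set of
`x'' ∈ X**` such that `a'' ↦ x'' · a''` is weak*-weak* continuous. -/
def rTopCenter (M : Bimodule A X) : Set (Dl (Dl X)) :=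
  {ξ | Continuous fun F : WeakDual ℂ (Dl A) => (M.rExt ξ F : WeakDual ℂ (Dl X))}

end Bimodule

/-- The topological centre of the bidual of a Banach algebra (with the first
Arens product): the set of `F ∈ A**` for which `G ↦ F □ G` is weak*-weak* continuous. -/
def arensTopCenter (A : Type u) [NonUnitalNormedRing A] [NormedSpace ℂ A]
    [SMulCommClass ℂ A A] [IsScalarTower ℂ A A] : Set (Dl (Dl A)) :=
  {F | Continuous fun G : WeakDual ℂ (Dl A) => (arensMul A F G : WeakDual ℂ (Dl A))}

/- ## Adjoint maps -/

section DMap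

variable {E F : Type*} [SeminormedAddCommGroup E] [NormedSpace ℂ E]
  [SeminormedAddCommGroup F] [NormedSpace ℂ F]

/-- The adjoint (dual map) of a bounded operator. -/
def dMap (f : E →L[ℂ] F) : Dl F →L[ℂ] Dl E :=
  (ContinuousLinearMap.compL ℂ E F ℂ).flip f

@[simp] lemma dMap_apply (f : E →L[ℂ] F) (g : Dl F) : dMap f g = g.comp f := rfl

/-- The canonical projection `X⁽⁴⁾ → X⁽²⁾`, i.e. the adjoint of the canonical
embedding `X* → X***`. -/
def Pmap (X : Type u) [SeminormedAddCommGroup X] [NormedSpace ℂ X] :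
    Dl (Dl (Dl (Dl X))) →L[ℂ] Dl (Dl X) :=
  dMap (inclDD (Dl X))

end DMap


section RN

/-- Minimal boundary. -/
lemma rn_exists_minimal {E : Type*} [AddCommGroup E] [Module ℝ E] [TopologicalSpace E]
    [IsTopologicalAddGroup E] [ContinuousSMul ℝ E] [T2Space E]
    {Q : Set E} (hQ : IsCompact Q) :
    ∃ K : Set E, Minimal (fun K => IsClosed K ∧ K ⊆ Q ∧
      ∀ (φ : E →L[ℝ] ℝ), ∀ q ∈ Q, ∃ x ∈ K, φ q ≤ φ x) K := by
  let S : Set (Set E) := {K | IsClosed K ∧ K ⊆ Q ∧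
      ∀ (φ : E →L[ℝ] ℝ), ∀ q ∈ Q, ∃ x ∈ K, φ q ≤ φ x}
  obtain ⟨K, hK1, hK⟩ := zorn_superset_nonempty S (by
    intro c hc hchain hne
    refine ⟨⋂₀ c, ⟨isClosed_sInter fun s hs => (hc hs).1, ?_, ?_⟩, fun s hs => Set.sInter_subset_of_mem hs⟩
    · obtain ⟨s, hs⟩ := hne
      exact (Set.sInter_subset_of_mem hs).trans (hc hs).2.1
    · intro φ q hq
      have : (⋂ s : c, (s.1 ∩ {x | φ q ≤ φ x})).Nonempty := by
        have : Nonempty c := hne.to_subtype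
        apply IsCompact.nonempty_iInter_of_directed_nonempty_isCompact_isClosed
        · intro s t
          rcases hchain.total s.2 t.2 with h | h
          · exact ⟨s, by intro x hx; exact hx, fun x hx => ⟨h hx.1, hx.2⟩⟩
          · exact ⟨t, fun x hx => ⟨h hx.1, hx.2⟩, by intro x hx; exact hx⟩
        · intro s
          obtain ⟨x, hx, hx2⟩ := (hc s.2).2.2 φ q hq
          exact ⟨x, hx, hx2⟩
        · intro s
          refine hQ.of_isClosed_subset ?_ (fun x hx => (hc s.2).2.1 hx.1)
          exact (hc s.2).1.inter (isClosed_le continuous_const φ.continuous)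
        · intro s
          exact (hc s.2).1.inter (isClosed_le continuous_const φ.continuous)
      obtain ⟨x, hx⟩ := this
      rw [Set.mem_iInter] at hx
      obtain ⟨s, hs⟩ := hne
      exact ⟨x, fun t ht => (hx ⟨t, ht⟩).1, (hx ⟨s, hs⟩).2⟩) Q
    ⟨hQ.isClosed, subset_rfl, fun φ q hq => ⟨q, hq, le_rfl⟩⟩
  exact ⟨K, hK⟩

lemma rn_dent {E : Type*} [AddCommGroup E] [Module ℝ E] [TopologicalSpace E]
    [IsTopologicalAddGroup E] [ContinuousSMul ℝ E] [T2Space E] [LocallyConvexSpace ℝ E]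
    (ν : Seminorm ℝ E) (hν : ∀ d r, IsClosed {x | ν (x - d) ≤ r})
    {Q : Set E} (hQ : IsCompact Q) (hQc : Convex ℝ Q) (hne : Q.Nonempty)
    (δ : ℝ) (hδ : 0 < δ) (R : ℝ) (hR : ∀ x ∈ Q, ∀ y ∈ Q, ν (x - y) ≤ R)
    (D : Set E) (hD : D.Countable) (hDQ : D ⊆ Q) (hDd : ∀ x ∈ Q, ∃ d ∈ D, ν (x - d) ≤ δ) :
    ∃ C : Set E, IsClosed C ∧ Convex ℝ C ∧ (∃ z ∈ Q, z ∉ C) ∧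
      ∀ x ∈ Q, ∀ y ∈ Q, x ∉ C → y ∉ C → ν (x - y) ≤ 4 * δ := by
  obtain ⟨K, ⟨hKc, hKQ, hKφ⟩, hKmin⟩ := rn_exists_minimal hQ
  have hKne : K.Nonempty := by
    obtain ⟨q, hq⟩ := hne
    obtain ⟨x, hx, _⟩ := hKφ 0 q hq
    exact ⟨x, hx⟩
  have hKcomp : IsCompact K := hQ.of_isClosed_subset hKc hKQ
  -- Baire
  obtain ⟨W, d, hW, hdD, hWne, hWd⟩ : ∃ (W : Set E) (d : E), IsOpen W ∧ d ∈ D ∧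
      (K ∩ W).Nonempty ∧ ∀ x ∈ K ∩ W, ν (x - d) ≤ δ := by
    have : CompactSpace K := isCompact_iff_compactSpace.mp hKcomp
    have : Nonempty K := hKne.to_subtype
    have : Countable D := hD.to_subtype
    obtain ⟨d, hd⟩ := nonempty_interior_of_iUnion_of_closed
      (f := fun d : D => {x : K | ν (x.1 - d.1) ≤ δ})
      (fun d => (hν d.1 δ).preimage continuous_subtype_val)
      (by
        ext x
        simp only [Set.mem_iUnion, Set.mem_ofPred_eq, Set.mem_univ, iff_true]
        obtain ⟨d, hd, h⟩ := hDd x.1 (hKQ x.2)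
        exact ⟨⟨d, hd⟩, h⟩)
    obtain ⟨U, hU, hU2⟩ := isOpen_induced_iff.mp (isOpen_interior (s := {x : K | ν (x.1 - d.1) ≤ δ}))
    refine ⟨U, d.1, hU, d.2, ?_, ?_⟩
    · obtain ⟨x, hx⟩ := hd
      refine ⟨x.1, x.2, ?_⟩
      rw [← hU2] at hx
      exact hx
    · rintro x ⟨hxK, hxU⟩
      have : (⟨x, hxK⟩ : K) ∈ interior {x : K | ν (x.1 - d.1) ≤ δ} := by
        rw [← hU2]; exact hxU
      have h2 : (⟨x, hxK⟩ : K) ∈ {x : K | ν (x.1 - d.1) ≤ δ} := interior_subset this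
      exact h2
  have hdQ := hDQ hdD
  -- K \ W fails the property
  obtain ⟨φ, q, hq, hφq⟩ : ∃ (φ : E →L[ℝ] ℝ) (q : E), q ∈ Q ∧ ∀ x ∈ K \ W, φ x < φ q := by
    by_contra hcon
    push Not at hcon
    have := hKmin (y := K \ W) ⟨hKc.sdiff hW, Set.sdiff_subset.trans hKQ, hcon⟩ Set.sdiff_subset
    obtain ⟨x, hxK, hxW⟩ := hWne
    exact (this hxK).2 hxW
  obtain ⟨s, hsq, hsK⟩ : ∃ s, s < φ q ∧ ∀ x ∈ K \ W, φ x ≤ s := by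
    rcases (K \ W).eq_empty_or_nonempty with h | h
    · exact ⟨φ q - 1, by linarith, by simp [h]⟩
    · obtain ⟨x, hx, hmax⟩ := (hKcomp.diff hW).exists_isMaxOn h φ.continuous.continuousOn
      exact ⟨φ x, hφq x hx, fun y hy => hmax hy⟩
  obtain ⟨m, hm, hmmax⟩ := hQ.exists_isMaxOn hne φ.continuous.continuousOn
  have hsm : s < φ m := lt_of_lt_of_le hsq (hmmax hq)
  set Q1 := Q ∩ {x | φ x ≤ s} with hQ1
  set Q2 := Q ∩ {x | ν (x - d) ≤ δ} with hQ2
  have hballc : Convex ℝ {x | ν (x - d) ≤ δ} := by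
    intro x hx y hy a b ha hb hab
    have : a • x + b • y - d = a • (x - d) + b • (y - d) := by
      have : d = a • d + b • d := by rw [← add_smul, hab, one_smul]
      nth_rewrite 1 [this]
      module
    simp only [Set.mem_ofPred_eq] at *
    rw [this]
    calc _ ≤ ν (a • (x - d)) + ν (b • (y - d)) := map_add_le_add _ _ _
      _ = a * ν (x - d) + b * ν (y - d) := by
        rw [map_smul_eq_mul, map_smul_eq_mul, Real.norm_of_nonneg ha, Real.norm_of_nonneg hb]
      _ ≤ a * δ + b * δ := by gcongr
      _ = δ := by rw [← add_mul, hab, one_mul]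
  have hQ1c : Convex ℝ Q1 := hQc.inter (convex_halfSpace_le φ.toLinearMap.isLinear s)
  have hQ2c : Convex ℝ Q2 := hQc.inter hballc
  have hQ1k : IsCompact Q1 := hQ.inter_right (isClosed_le φ.continuous continuous_const)
  have hQ2k : IsCompact Q2 := hQ.inter_right (hν d δ)
  have hKsub : K ⊆ Q1 ∪ Q2 := by
    intro x hx
    by_cases hxW : x ∈ W
    · exact Or.inr ⟨hKQ hx, hWd x ⟨hx, hxW⟩⟩
    · exact Or.inl ⟨hKQ hx, hsK x ⟨hx, hxW⟩⟩
  have hdQ2 : d ∈ Q2 := ⟨hdQ, by simpa using hδ.le⟩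
  -- every point of `Q` is a join
  have hjoin : ∀ x ∈ Q, ∃ t ∈ Set.Icc (0:ℝ) 1, ∃ x1 ∈ Q, φ (t • x1) ≤ t * s ∧ ∃ x2 ∈ Q2,
      x = t • x1 + (1 - t) • x2 := by
    rcases Q1.eq_empty_or_nonempty with h1 | h1
    · intro x hx
      have hx2 : x ∈ Q2 := by
        by_contra hx2
        obtain ⟨ψ, u, hψ1, hψ2⟩ := geometric_hahn_banach_closed_point hQ2c hQ2k.isClosed hx2
        obtain ⟨y, hy, hy2⟩ := hKφ ψ x hx
        have := hKsub hy
        rw [h1, Set.empty_union] at this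
        linarith [hψ1 y this]
      exact ⟨0, by simp, x, hx, by simp, x, hx2, by simp⟩
    · have hJk : IsCompact (convexJoin ℝ Q1 Q2) := by
        have : convexJoin ℝ Q1 Q2 = (fun p : ℝ × E × E => p.1 • p.2.1 + (1 - p.1) • p.2.2) ''
            (Set.Icc (0:ℝ) 1 ×ˢ Q1 ×ˢ Q2) := by
          ext x
          simp only [mem_convexJoin, Set.mem_image, Set.mem_prod, Prod.exists]
          constructor
          · rintro ⟨a, ha, b, hb, hx⟩
            obtain ⟨t, s', ht, hs', hts, rfl⟩ := hx
            refine ⟨t, a, b, ⟨⟨ht, by linarith⟩, ha, hb⟩, ?_⟩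
            rw [show 1 - t = s' by linarith]
          · rintro ⟨t, a, b, ⟨ht, ha, hb⟩, rfl⟩
            exact ⟨a, ha, b, hb, t, 1 - t, ht.1, by linarith [ht.2], by ring, rfl⟩
        rw [this]
        exact (isCompact_Icc.prod (hQ1k.prod hQ2k)).image (by fun_prop)
      intro x hx
      have hxJ : x ∈ convexJoin ℝ Q1 Q2 := by
        by_contra hx2
        obtain ⟨ψ, u, hψ1, hψ2⟩ := geometric_hahn_banach_closed_point (hQ1c.convexJoin hQ2c)
          hJk.isClosed hx2
        obtain ⟨y, hy, hy2⟩ := hKφ ψ x hx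
        have : y ∈ convexJoin ℝ Q1 Q2 := by
          rcases hKsub hy with h | h
          · exact subset_convexJoin_left ⟨d, hdQ2⟩ h
          · exact subset_convexJoin_right h1 h
        linarith [hψ1 y this]
      obtain ⟨a, ha, b, hb, t, s', ht, hs', hts, rfl⟩ := mem_convexJoin.mp hxJ
      refine ⟨t, ⟨ht, by linarith⟩, a, ha.1, ?_, b, hb, by rw [show 1 - t = s' by linarith]⟩
      rw [map_smul, smul_eq_mul]
      exact mul_le_mul_of_nonneg_left ha.2 ht
  have hR0 : 0 ≤ R := (apply_nonneg ν _).trans (hR d hdQ d hdQ)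
  set η := δ * (φ m - s) / (R + 1) with hη
  have hηpos : 0 < η := by
    have : 0 < φ m - s := by linarith
    positivity
  have key : ∀ x ∈ Q, φ m - η < φ x → ν (x - d) ≤ 2 * δ := by
    intro x hx hxφ
    obtain ⟨t, ⟨ht0, ht1⟩, x1, hx1, hx1s, x2, hx2, rfl⟩ := hjoin x hx
    have h2 : φ x2 ≤ φ m := hmmax hx2.1
    have h3 : t * (φ m - s) < η := by
      rw [map_add, map_smul φ (1 - t), smul_eq_mul] at hxφ
      nlinarith
    have h4 : t * (R + 1) < δ := by
      rw [hη, lt_div_iff₀ (by linarith)] at h3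
      have : 0 < φ m - s := by linarith
      nlinarith
    have e : t • x1 + (1 - t) • x2 - d = t • (x1 - d) + (1 - t) • (x2 - d) := by module
    rw [e]
    calc _ ≤ ν (t • (x1 - d)) + ν ((1 - t) • (x2 - d)) := map_add_le_add _ _ _
      _ = t * ν (x1 - d) + (1 - t) * ν (x2 - d) := by
        rw [map_smul_eq_mul, map_smul_eq_mul, Real.norm_of_nonneg ht0,
          Real.norm_of_nonneg (by linarith)]
      _ ≤ t * R + (1 - t) * δ := by
        have h5 := hR x1 hx1 d hdQ
        have h6 : ν (x2 - d) ≤ δ := hx2.2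
        have : 0 ≤ 1 - t := by linarith
        gcongr
      _ ≤ 2 * δ := by nlinarith
  refine ⟨{x | φ x ≤ φ m - η}, isClosed_le φ.continuous continuous_const,
    convex_halfSpace_le φ.toLinearMap.isLinear _, ⟨m, hm, by simp [hηpos]⟩, ?_⟩
  intro x hx y hy hxC hyC
  have h1 := key x hx (by simpa using hxC)
  have h2 := key y hy (by simpa using hyC)
  have : x - y = (x - d) - (y - d) := by abel
  rw [this]
  calc _ ≤ ν (x - d) + ν (y - d) := map_sub_le_add _ _ _
    _ ≤ _ := by linarith

end RN

section RN2
open Filter Topology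

lemma rn_fix {E : Type*} [AddCommGroup E] [Module ℝ E] [TopologicalSpace E]
    [IsTopologicalAddGroup E] [ContinuousSMul ℝ E] [T2Space E]
    {Q : Set E} (hQ : IsCompact Q) (hQc : Convex ℝ Q) (hne : Q.Nonempty)
    (L : E →L[ℝ] E) (b : E) (hT : ∀ x ∈ Q, L x + b ∈ Q) :
    ∃ x ∈ Q, L x + b = x := by
  obtain ⟨x, hx⟩ := hne
  let y : ℕ → E := fun n => (fun x => L x + b)^[n] x
  have hy : ∀ n, y n ∈ Q := by
    intro n
    induction n with
    | zero => exact hx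
    | succ n ih => simp only [y, Function.iterate_succ_apply']; exact hT _ ih
  have hys : ∀ n, y (n+1) = L (y n) + b := by
    intro n; simp only [y, Function.iterate_succ_apply']
  let S : ℕ → E := fun n => ((n:ℝ)+1)⁻¹ • ∑ k ∈ Finset.range (n+1), y k
  have hS : ∀ n, S n ∈ Q := by
    intro n
    have h0 : (n:ℝ) + 1 ≠ 0 := by positivity
    simp only [S, Finset.smul_sum]
    refine hQc.sum_mem (fun _ _ => by positivity) ?_ (fun k _ => hy k)
    simp [mul_inv_cancel₀ h0]
  have hTS : ∀ n, L (S n) + b - S n = ((n:ℝ)+1)⁻¹ • (y (n+1) - x) := by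
    intro n
    have h0 : (n:ℝ) + 1 ≠ 0 := by positivity
    have e1 : L (∑ k ∈ Finset.range (n+1), y k) + ((n:ℝ)+1) • b
        = ∑ k ∈ Finset.range (n+1), y (k+1) := by
      simp only [hys, map_sum, Finset.sum_add_distrib, Finset.sum_const, Finset.card_range]
      rw [← Nat.cast_smul_eq_nsmul ℝ]; push_cast; rfl
    have e2 : ∑ k ∈ Finset.range (n+1), y (k+1) + x = ∑ k ∈ Finset.range (n+1), y k + y (n+1) := by
      rw [← Finset.sum_range_succ, Finset.sum_range_succ' _ (n+1)]; rfl
    have e3 : b = ((n:ℝ)+1)⁻¹ • (((n:ℝ)+1) • b) := by rw [smul_smul, inv_mul_cancel₀ h0, one_smul]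
    have e4 : y (n+1) - x = ∑ k ∈ Finset.range (n+1), y (k+1) - ∑ k ∈ Finset.range (n+1), y k := by
      rw [sub_eq_sub_iff_add_eq_add, e2]; abel
    rw [e4, ← e1]
    nth_rewrite 1 [e3]
    simp only [S, map_smul, smul_sub, smul_add]
  let U : Ultrafilter ℕ := hyperfilter ℕ
  obtain ⟨z, hz, hzl⟩ := hQ.ultrafilter_le_nhds' (U.map S) (by
    rw [Ultrafilter.mem_map]; exact Filter.univ_mem' hS)
  obtain ⟨w, hw, hwl⟩ := hQ.ultrafilter_le_nhds' (U.map (fun n => y (n+1))) (by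
    rw [Ultrafilter.mem_map]; exact Filter.univ_mem' (fun n => hy _))
  have h1 : Tendsto S U (𝓝 z) := hzl
  have h2 : Tendsto (fun n => y (n+1)) U (𝓝 w) := hwl
  have hU : (U : Filter ℕ) ≤ atTop := by
    rw [← Nat.cofinite_eq_atTop]; exact hyperfilter_le_cofinite
  have h3 : Tendsto (fun n : ℕ => ((n:ℝ)+1)⁻¹) U (𝓝 0) := by
    refine Tendsto.mono_left ?_ hU
    simpa using tendsto_one_div_add_atTop_nhds_zero_nat (𝕜 := ℝ)
  have h4 : Tendsto (fun n => L (S n) + b - S n) U (𝓝 (L z + b - z)) :=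
    (((L.continuous.tendsto z).comp h1).add_const b).sub h1
  have h5 : Tendsto (fun n => L (S n) + b - S n) U (𝓝 0) := by
    simp only [hTS]
    simpa using h3.smul (h2.sub_const x)
  exact ⟨z, hz, sub_eq_zero.mp (tendsto_nhds_unique h4 h5)⟩

variable {V : Type*} [NormedAddCommGroup V] [NormedSpace ℝ V]

lemma rn_words {ι : Type*} (L : ι → V →L[ℝ] V) (b : ι → V) (hL : ∀ i x, ‖L i x‖ = ‖x‖)
    (w : List ι) : ∃ (M : V →ₗ[ℝ] V) (c : V), (∀ x, ‖M x‖ = ‖x‖) ∧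
      ∀ x, w.foldr (fun i y => L i y + b i) x = M x + c := by
  induction w with
  | nil => exact ⟨LinearMap.id, 0, by simp, by simp⟩
  | cons i w ih =>
    obtain ⟨M, c, hM, h⟩ := ih
    refine ⟨(L i).toLinearMap ∘ₗ M, L i c + b i, by simp [hL, hM], ?_⟩
    intro x
    simp only [List.foldr_cons, h]
    simp [add_assoc]

lemma rn_closed_image {s : Set V} (hs : Convex ℝ s) (hc : IsClosed s) :
    IsClosed (toWeakSpace ℝ V '' s) := by
  have := hs.toWeakSpace_closure (𝕜 := ℝ)
  rw [hc.closure_eq] at this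
  rw [this]; exact isClosed_closure

lemma rn_fin {ι : Type*} (L : ι → V →L[ℝ] V) (b : ι → V) (hL : ∀ i x, ‖L i x‖ = ‖x‖)
    {Q : Set V} (hQ : IsCompact (toWeakSpace ℝ V '' Q)) (hQc : Convex ℝ Q) (hne : Q.Nonempty)
    (R : ℝ) (hR : ∀ x ∈ Q, ∀ y ∈ Q, ‖x - y‖ ≤ R)
    (hT : ∀ i, ∀ x ∈ Q, L i x + b i ∈ Q) (s : Finset ι) :
    ∃ x ∈ Q, ∀ i ∈ s, L i x + b i = x := by
  classical
  rcases s.eq_empty_or_nonempty with rfl | hsne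
  · obtain ⟨x, hx⟩ := hne
    exact ⟨x, hx, by simp⟩
  let e := toWeakSpace ℝ V
  have hQc' : Convex ℝ (e '' Q) := hQc.linear_image e.toLinearMap
  -- fixed point of the average
  obtain ⟨x0, hx0, hfix⟩ : ∃ x ∈ Q, ∑ i ∈ s, (L i x + b i - x) = 0 := by
    have hcard : (s.card : ℝ) ≠ 0 := by exact_mod_cast hsne.card_ne_zero
    obtain ⟨z, ⟨x, hx, rfl⟩, hz⟩ := rn_fix hQ hQc' (hne.image _)
      (WeakSpace.map ((s.card : ℝ)⁻¹ • ∑ i ∈ s, L i)) (e ((s.card : ℝ)⁻¹ • ∑ i ∈ s, b i)) (by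
        rintro _ ⟨x, hx, rfl⟩
        refine ⟨∑ i ∈ s, (s.card : ℝ)⁻¹ • (L i x + b i), ?_, ?_⟩
        · refine hQc.sum_mem (fun _ _ => by positivity) ?_ (fun i _ => hT i x hx)
          simp [mul_inv_cancel₀ hcard]
        · have h7 : ∑ i ∈ s, (s.card : ℝ)⁻¹ • (L i x + b i) =
              ((s.card : ℝ)⁻¹ • ∑ i ∈ s, L i) x + (s.card : ℝ)⁻¹ • ∑ i ∈ s, b i := by
            rw [← Finset.smul_sum, Finset.sum_add_distrib, smul_add,
              _root_.smul_apply, sum_apply]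
          exact (congrArg e h7).trans (map_add e _ _))
    refine ⟨x, hx, ?_⟩
    have hz' : (s.card : ℝ)⁻¹ • (∑ i ∈ s, L i) x + (s.card : ℝ)⁻¹ • ∑ i ∈ s, b i = x := hz
    have hz2 : (s.card : ℝ) • ((s.card : ℝ)⁻¹ • (∑ i ∈ s, L i) x + (s.card : ℝ)⁻¹ • ∑ i ∈ s, b i)
      = (s.card : ℝ) • x := by rw [hz']
    rw [smul_add, smul_smul, smul_smul, mul_inv_cancel₀ hcard, one_smul, one_smul] at hz2
    rw [Finset.sum_sub_distrib, Finset.sum_add_distrib, ← sum_apply, hz2,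
      Finset.sum_const, ← Nat.cast_smul_eq_nsmul ℝ, sub_self]
  refine ⟨x0, hx0, ?_⟩
  by_contra hcon
  set s' := s.filter (fun i => L i x0 + b i ≠ x0) with hs'
  have hs'ne : s'.Nonempty := by
    push Not at hcon
    obtain ⟨i, hi, h⟩ := hcon
    exact ⟨i, by simp [hs', hi, h]⟩
  have hfix' : ∑ i ∈ s', (L i x0 + b i - x0) = 0 := by
    rw [← hfix, hs']
    apply Finset.sum_subset (Finset.filter_subset _ _)
    intro i hi hi2
    simp only [Finset.mem_filter, hi, true_and, not_not] at hi2
    rw [hi2, sub_self]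
  obtain ⟨j, hj, hjmin⟩ := s'.exists_min_image (fun i => ‖L i x0 + b i - x0‖) hs'ne
  set ε := ‖L j x0 + b j - x0‖ with hε
  have hεpos : 0 < ε := norm_pos_iff.mpr (sub_ne_zero.mpr (Finset.mem_filter.mp hj).2)
  let g : List ι → V → V := fun w x => w.foldr (fun i y => L i y + b i) x
  let O : Set V := Set.range (fun w : List s' => g (w.map Subtype.val) x0)
  have hOc : O.Countable := Set.countable_range _
  have hOQ : O ⊆ Q := by
    rintro _ ⟨w, rfl⟩
    induction w with
    | nil => exact hx0
    | cons i w ih => exact hT _ _ ih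
  let P : Set V := closure (convexHull ℝ O)
  have hPconv : Convex ℝ P := (convex_convexHull ℝ O).closure
  have hPimg : e '' P = closure (e '' (convexHull ℝ O)) :=
    (convex_convexHull ℝ O).toWeakSpace_closure (𝕜 := ℝ)
  have hPQ' : e '' P ⊆ e '' Q := by
    rw [hPimg]
    exact closure_minimal (Set.image_mono (convexHull_min hOQ hQc)) hQ.isClosed
  have hPQ : P ⊆ Q := (Set.image_subset_image_iff e.injective).mp hPQ'
  have hPk : IsCompact (e '' P) := hQ.of_isClosed_subset (by rw [hPimg]; exact isClosed_closure) hPQ'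
  have hOP : O ⊆ P := (subset_convexHull ℝ O).trans subset_closure
  have hPsep : TopologicalSpace.IsSeparable P := by
    refine TopologicalSpace.IsSeparable.closure ?_
    refine (hOc.isSeparable.span (R := ℝ)).mono ?_
    exact convexHull_min Submodule.subset_span (Submodule.convex _)
  obtain ⟨D, hDP, hDc, hDd⟩ := hPsep.exists_countable_dense_subset
  let ν : Seminorm ℝ (WeakSpace ℝ V) := (normSeminorm ℝ V).comp e.symm.toLinearMap
  have hνe : ∀ x y : V, ν (e x - e y) = ‖x - y‖ := fun x y => rfl
  have : LocallyConvexSpace ℝ (WeakSpace ℝ V) :=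
    (topDualPairing ℝ V).flip.weakBilin_withSeminorms.toLocallyConvexSpace
  obtain ⟨C, hCc, hCconv, ⟨z, hzP, hzC⟩, hdiam⟩ := rn_dent ν (by
      intro d r
      have := rn_closed_image (convex_closedBall (e.symm d) r) Metric.isClosed_closedBall
      convert this using 1
      ext x
      simp only [Set.mem_ofPred_eq, Set.mem_image, Metric.mem_closedBall, dist_eq_norm]
      constructor
      · intro h; exact ⟨e.symm x, h, by simp [e]⟩
      · rintro ⟨y, hy, rfl⟩; exact hy)
    hPk (hPconv.linear_image e.toLinearMap) ⟨e x0, x0, hOP ⟨[], rfl⟩, rfl⟩ (ε / 5) (by positivity) R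
    (by
      rintro _ ⟨x, hx, rfl⟩ _ ⟨y, hy, rfl⟩
      exact hR x (hPQ hx) y (hPQ hy))
    (e '' D) (hDc.image _) (Set.image_mono hDP) (by
      rintro _ ⟨x, hx, rfl⟩
      obtain ⟨d, hd, hxd⟩ := Metric.mem_closure_iff.mp (hDd hx) (ε / 5) (by positivity)
      refine ⟨e d, ⟨d, hd, rfl⟩, ?_⟩
      change ‖x - d‖ ≤ _
      rw [← dist_eq_norm]; exact hxd.le)
  -- some word leaves `C`
  obtain ⟨w, hw⟩ : ∃ w : List s', e (g (w.map Subtype.val) x0) ∉ C := by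
    by_contra hall
    push Not at hall
    apply hzC
    rw [hPimg] at hzP
    refine closure_minimal ?_ hCc hzP
    have hpre : convexHull ℝ O ⊆ e ⁻¹' C :=
      convexHull_min (by rintro _ ⟨w, rfl⟩; exact hall w) (hCconv.linear_preimage e.toLinearMap)
    exact Set.image_subset_iff.mpr hpre
  obtain ⟨M, c, hM, hg⟩ := rn_words L b hL (w.map Subtype.val)
  have hg' : ∀ x, g (w.map Subtype.val) x = M x + c := hg
  obtain ⟨i, hi, hiC⟩ : ∃ i ∈ s', e (g (w.map Subtype.val) (L i x0 + b i)) ∉ C := by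
    by_contra hall
    push Not at hall
    apply hw
    have hcard : (s'.card : ℝ) ≠ 0 := by exact_mod_cast hs'ne.card_ne_zero
    have hm := hCconv.sum_mem (t := s') (w := fun _ => (s'.card : ℝ)⁻¹)
      (fun _ _ => by positivity) (by simp [mul_inv_cancel₀ hcard]) hall
    convert hm using 1
    rw [← Finset.smul_sum]
    have : ∑ i ∈ s', e (g (w.map Subtype.val) (L i x0 + b i))
        = (s'.card : ℝ) • e (g (w.map Subtype.val) x0) := by
      rw [← map_sum, ← map_smul]
      congr 1
      have h6 : ∀ i ∈ s', g (w.map Subtype.val) (L i x0 + b i)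
        = M (L i x0 + b i - x0) + (M x0 + c) := by
        intro i _; rw [hg', map_sub]; abel
      rw [Finset.sum_congr rfl h6, Finset.sum_add_distrib, ← map_sum, hfix', hg', Finset.sum_const,
        ← Nat.cast_smul_eq_nsmul ℝ]
      simp
    rw [this, smul_smul, inv_mul_cancel₀ hcard, one_smul]
  have h7 : g (w.map Subtype.val) (L i x0 + b i) ∈ O :=
    ⟨w ++ [⟨i, hi⟩], by simp [g]⟩
  have h8 := hdiam _ ⟨_, hOP h7, rfl⟩ _ ⟨_, hOP ⟨w, rfl⟩, rfl⟩ hiC hw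
  rw [hνe] at h8
  beta_reduce at h8
  rw [hg', hg', add_sub_add_right_eq_sub, ← map_sub, hM] at h8
  have := hjmin i hi
  linarith

/-- Ryll-Nardzewski for affine isometries. -/
theorem rn_main {ι : Type*} (L : ι → V →L[ℝ] V) (b : ι → V) (hL : ∀ i x, ‖L i x‖ = ‖x‖)
    {Q : Set V} (hQ : IsCompact (toWeakSpace ℝ V '' Q)) (hQc : Convex ℝ Q) (hne : Q.Nonempty)
    (R : ℝ) (hR : ∀ x ∈ Q, ∀ y ∈ Q, ‖x - y‖ ≤ R)
    (hT : ∀ i, ∀ x ∈ Q, L i x + b i ∈ Q) :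
    ∃ x ∈ Q, ∀ i, L i x + b i = x := by
  let e := toWeakSpace ℝ V
  have hcl : ∀ i, IsClosed {z : WeakSpace ℝ V | WeakSpace.map (L i) z + e (b i) = z} := fun i =>
    isClosed_eq (((WeakSpace.map (L i)).continuous).add continuous_const) continuous_id
  obtain ⟨z, ⟨x, hx, rfl⟩, hz⟩ := hQ.inter_iInter_nonempty
    (fun i => {z : WeakSpace ℝ V | WeakSpace.map (L i) z + e (b i) = z}) hcl (by
      intro s
      obtain ⟨x, hx, h⟩ := rn_fin L b hL hQ hQc hne R hR hT s
      refine ⟨e x, ⟨x, hx, rfl⟩, ?_⟩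
      simp only [Set.mem_iInter]
      intro i hi
      exact h i hi)
  refine ⟨x, hx, fun i => ?_⟩
  exact Set.mem_iInter.mp hz i

end RN2

section LF
open Filter Topology

variable {V : Type u} [NormedAddCommGroup V] [NormedSpace ℂ V]

lemma lf_norm_incl (x : V) : ‖inclDD V x‖ = ‖x‖ :=
  (NormedSpace.inclusionInDoubleDualLi (𝕜 := ℂ) (E := V)).norm_map x

/-- the canonical map from the weak space to the weak-star bidual -/
def lfJ (x : WeakSpace ℝ V) : WeakDual ℂ (Dl V) :=
  StrongDual.toWeakDual (inclDD V ((toWeakSpace ℝ V).symm x))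

lemma lfJ_inducing : IsInducing (lfJ (V := V)) := by
  constructor
  apply le_antisymm
  · apply continuous_iff_le_induced.mp
    apply WeakDual.continuous_of_continuous_eval
    intro f
    have h1 : Continuous fun x : WeakSpace ℝ V => ((f ((toWeakSpace ℝ V).symm x)).re : ℂ) :=
      Complex.continuous_ofReal.comp
        (WeakBilin.eval_continuous (topDualPairing ℝ V).flip
          (Complex.reCLM.comp (f.restrictScalars ℝ)))
    have h2 : Continuous fun x : WeakSpace ℝ V => ((f ((toWeakSpace ℝ V).symm x)).im : ℂ) :=
      Complex.continuous_ofReal.comp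
        (WeakBilin.eval_continuous (topDualPairing ℝ V).flip
          (Complex.imCLM.comp (f.restrictScalars ℝ)))
    have h3 := h1.add (h2.mul_const Complex.I)
    refine h3.congr ?_
    intro x
    exact Complex.re_add_im _
  · have : @Continuous _ _ (TopologicalSpace.induced (lfJ (V := V)) inferInstance)
      (inferInstanceAs (TopologicalSpace (WeakSpace ℝ V))) id := by
      let := TopologicalSpace.induced (lfJ (V := V)) inferInstance
      refine @WeakBilin.continuous_of_continuous_eval _ ℝ V _ _ _ _ _ _ _ (topDualPairing ℝ V).flip
        this id ?_
      intro l
      have h1 : Continuous fun x : WeakSpace ℝ V =>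
          (lfJ x (StrongDual.extendRCLike (𝕜 := ℂ) l)).re :=
        Complex.continuous_re.comp ((WeakDual.eval_continuous _).comp continuous_induced_dom)
      refine h1.congr ?_
      intro x
      exact StrongDual.re_extendRCLike_apply (𝕜 := ℂ) l _
    exact continuous_id_iff_le.mp this

/-- identity -/
def lfS (c : WeakDual ℂ (Dl V)) : Dl (Dl V) := c

theorem lf_fix
    (hLE : ∀ c : Dl (Dl V), ∃ v : V, ∀ a : V, ‖v - a‖ + ‖c - inclDD V v‖ ≤ ‖c - inclDD V a‖)
    {ι : Type*} (L : ι → V →L[ℂ] V) (b : ι → V) (hL : ∀ i x, ‖L i x‖ = ‖x‖)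
    (B : Set V) (hBne : B.Nonempty) (R : ℝ) (hB : ∀ a ∈ B, ‖a‖ ≤ R)
    (hT : ∀ i, ∀ a ∈ B, ∃ a' ∈ B, L i a' + b i = a) :
    ∃ x, ∀ i, L i x + b i = x := by
  let K : ℝ → Set (WeakDual ℂ (Dl V)) := fun r =>
    ⋂ a ∈ B, WeakDual.toStrongDual ⁻¹' Metric.closedBall (inclDD V a) r
  have hKmem : ∀ r c, c ∈ K r ↔ ∀ a ∈ B, ‖lfS c - inclDD V a‖ ≤ r := by
    intro r c
    simp only [K, Set.mem_iInter, Set.mem_preimage, Metric.mem_closedBall]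
    have hd : ∀ a, dist (WeakDual.toStrongDual c) (inclDD V a) = ‖lfS c - inclDD V a‖ :=
      fun a => dist_eq_norm (E := Dl (Dl V)) (lfS c) (inclDD V a)
    simp only [hd]
  have hKcl : ∀ r, IsClosed (K r) := fun r =>
    isClosed_biInter fun a _ => WeakDual.isClosed_closedBall _ _
  have hKc : ∀ r, IsCompact (K r) := fun r => by
    obtain ⟨a, ha⟩ := hBne
    exact (WeakDual.isCompact_closedBall (inclDD V a) r).of_isClosed_subset (hKcl r)
      (Set.biInter_subset_of_mem ha)
  have hKmono : ∀ r r', r ≤ r' → K r ⊆ K r' := by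
    intro r r' h c hc
    rw [hKmem] at hc ⊢
    exact fun a ha => (hc a ha).trans h
  let S : Set ℝ := {r | (K r).Nonempty}
  have hSbdd : BddBelow S := by
    refine ⟨0, ?_⟩
    rintro r ⟨c, hc⟩
    obtain ⟨a, ha⟩ := hBne
    exact (norm_nonneg _).trans ((hKmem r c).mp hc a ha)
  have hSne : S.Nonempty := by
    refine ⟨R, 0, ?_⟩
    rw [hKmem]
    intro a ha
    rw [show lfS (V := V) 0 = 0 from rfl, zero_sub, norm_neg, lf_norm_incl]
    exact hB a ha
  set ρ := sInf S with hρ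
  obtain ⟨c0, hc0⟩ : (K ρ).Nonempty := by
    have := IsCompact.nonempty_iInter_of_sequence_nonempty_isCompact_isClosed
      (fun n : ℕ => K (ρ + 1 / ((n : ℝ) + 1)))
      (fun n => hKmono _ _ (by
        have : (1 : ℝ) / (((n + 1 : ℕ) : ℝ) + 1) ≤ 1 / ((n : ℝ) + 1) := by
          push_cast
          gcongr
          linarith
        linarith))
      (fun n => by
        obtain ⟨r, hr, hlt⟩ := (csInf_lt_iff hSbdd hSne).mp
          (show sInf S < ρ + 1 / ((n : ℝ) + 1) by
            have : (0 : ℝ) < 1 / ((n : ℝ) + 1) := by positivity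
            linarith)
        exact Set.Nonempty.mono (hKmono _ _ hlt.le) hr)
      (hKc _) (fun n => hKcl _)
    obtain ⟨c, hc⟩ := this
    refine ⟨c, (hKmem _ _).mpr fun a ha => ?_⟩
    refine le_of_forall_pos_le_add fun ε hε => ?_
    obtain ⟨n, hn⟩ := exists_nat_one_div_lt hε
    have := (hKmem _ _).mp (Set.mem_iInter.mp hc n) a ha
    linarith
  let C : Set V := {x | ∀ a ∈ B, ‖x - a‖ ≤ ρ}
  have hCK : lfJ '' (toWeakSpace ℝ V '' C) = K ρ := by
    ext c
    constructor
    · rintro ⟨_, ⟨x, hx, rfl⟩, rfl⟩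
      rw [hKmem]
      intro a ha
      have : lfS (lfJ (toWeakSpace ℝ V x)) = inclDD V x := rfl
      rw [this, ← map_sub, lf_norm_incl]
      exact hx a ha
    · intro hc
      rw [hKmem] at hc
      obtain ⟨v, hv⟩ := hLE (lfS c)
      have h1 : ρ - ‖lfS c - inclDD V v‖ ∈ S := by
        refine ⟨StrongDual.toWeakDual (inclDD V v), (hKmem _ _).mpr fun a ha => ?_⟩
        have h2 : lfS (StrongDual.toWeakDual (inclDD V v)) = inclDD V v := rfl
        rw [h2, ← map_sub, lf_norm_incl]
        have := hv a
        have := hc a ha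
        linarith
      have h3 := csInf_le hSbdd h1
      have h4 : ‖lfS c - inclDD V v‖ = 0 :=
        le_antisymm (by linarith) (norm_nonneg _)
      have h5 : lfS c = inclDD V v := by
        have h6 : lfS c - inclDD V v = 0 := (ContinuousLinearMap.opNorm_zero_iff _).mp h4
        exact sub_eq_zero.mp h6
      refine ⟨_, ⟨v, ?_, rfl⟩, ?_⟩
      · intro a ha
        have := hc a ha
        rw [h5, ← map_sub, lf_norm_incl] at this
        exact this
      · change StrongDual.toWeakDual (inclDD V v) = c
        rw [← h5]; rfl
  have hCc : IsCompact (toWeakSpace ℝ V '' C) := by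
    rw [lfJ_inducing.isCompact_iff, hCK]
    exact hKc ρ
  have hCne : C.Nonempty := by
    rw [← hCK] at hc0
    obtain ⟨_, ⟨x, hx, _⟩, _⟩ := hc0
    exact ⟨x, hx⟩
  have hCconv : Convex ℝ C := by
    have : C = ⋂ a ∈ B, Metric.closedBall a ρ := by
      ext x; simp [C, dist_eq_norm]
    rw [this]
    exact convex_iInter₂ fun a _ => convex_closedBall a ρ
  obtain ⟨x, -, hx⟩ := rn_main (fun i => (L i).restrictScalars ℝ) b hL hCc hCconv hCne (ρ + ρ)
    (by
      intro x hx y hy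
      obtain ⟨a, ha⟩ := hBne
      have h1 := hx a ha
      have h2 := hy a ha
      calc ‖x - y‖ = ‖(x - a) - (y - a)‖ := by congr 1; abel
        _ ≤ _ := (norm_sub_le _ _).trans (add_le_add h1 h2))
    (by
      intro i x hx a ha
      obtain ⟨a', ha', rfl⟩ := hT i a ha
      change ‖L i x + b i - (L i a' + b i)‖ ≤ ρ
      rw [add_sub_add_right_eq_sub, ← map_sub, hL]
      exact hx a' ha')
  exact ⟨x, hx⟩

end LF

section VF
open scoped InnerProductSpace ComplexOrder

lemma vf_pos {M : Type u} [CStarAlgebra M] [PartialOrder M] [StarOrderedRing M]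
    (f : M →L[ℂ] ℂ) (hf : ‖f‖ = 1) :
    ∃ φ : M →ₚ[ℂ] ℂ, (φ 1).re ≤ 1 ∧ ∀ x, ‖f x‖ ^ 2 ≤ (φ (star x * x)).re := by
  let C : Set M := {a | ∃ x, star x * x ≤ a ∧ 1 ≤ (f x).re}
  have hfle : ∀ x, ‖f x‖ ≤ ‖x‖ := fun x => by simpa [hf] using f.le_opNorm x
  have hconv : Convex ℝ C := by
    rintro a ⟨x, hx, hfx⟩ b ⟨y, hy, hfy⟩ s t hs ht hst
    refine ⟨(s : ℂ) • x + (t : ℂ) • y, ?_, ?_⟩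
    · have h1 : s • (star x * x) + t • (star y * y) ≤ s • a + t • b :=
        add_le_add (smul_le_smul_of_nonneg_left hx hs) (smul_le_smul_of_nonneg_left hy ht)
      refine le_trans ?_ h1
      rw [← sub_nonneg]
      have h2 : s • (star x * x) + t • (star y * y)
          - star ((s : ℂ) • x + (t : ℂ) • y) * ((s : ℂ) • x + (t : ℂ) • y)
          = (s * t) • (star (x - y) * (x - y)) := by
        obtain rfl : t = 1 - s := by linarith
        simp only [star_add, star_smul, star_sub, star_trivial,
          Complex.coe_smul, add_mul, mul_add, sub_mul, mul_sub, smul_mul_assoc, mul_smul_comm,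
          smul_smul, smul_add, smul_sub]
        module
      rw [h2]
      exact smul_nonneg (mul_nonneg hs ht) (star_mul_self_nonneg _)
    · rw [map_add, map_smul, map_smul, Complex.add_re, smul_eq_mul, smul_eq_mul,
        Complex.re_ofReal_mul, Complex.re_ofReal_mul]
      nlinarith
  have hdisj : Disjoint (Metric.ball (0 : M) 1) C := by
    rw [Set.disjoint_left]
    rintro a ha ⟨x, hx, hfx⟩
    rw [mem_ball_zero_iff] at ha
    have h1 : ‖star x * x‖ ≤ ‖a‖ :=
      CStarAlgebra.norm_le_norm_of_nonneg_of_le (star_mul_self_nonneg x) hx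
    rw [CStarRing.norm_star_mul_self] at h1
    have h2 := (Complex.re_le_norm _).trans (hfle x)
    nlinarith
  obtain ⟨ψ, s, hψ1, hψ2⟩ := RCLike.geometric_hahn_banach_open (𝕜 := ℂ)
    (convex_ball (0 : M) 1) Metric.isOpen_ball hconv hdisj
  have hspos : 0 < s := by simpa using hψ1 0 (by simp)
  obtain ⟨x0, hx0⟩ : ∃ x, f x ≠ 0 := by
    by_contra h
    push Not at h
    have : f = 0 := by ext x; simp [h]
    rw [this] at hf; simp at hf
  have hnorm : ∀ x, f x ≠ 0 → star ((f x)⁻¹ • x) * ((f x)⁻¹ • x) ∈ C := by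
    intro x hx
    exact ⟨_, le_rfl, by simp [hx]⟩
  have hpos : ∀ b : M, 0 ≤ b → 0 ≤ (ψ b).re := by
    intro b hb
    obtain ⟨c, hc⟩ : ∃ c, c ∈ C := ⟨_, hnorm x0 hx0⟩
    have h1 : ∀ t : ℝ, 0 ≤ t → s ≤ (ψ c).re + t * (ψ b).re := by
      intro t ht
      have : c + (t : ℂ) • b ∈ C := by
        obtain ⟨x, hx, hfx⟩ := hc
        refine ⟨x, hx.trans ?_, hfx⟩
        rw [Complex.coe_smul]
        exact le_add_of_nonneg_right (smul_nonneg ht hb)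
      have := hψ2 _ this
      simpa using this
    by_contra hneg
    push Not at hneg
    have h3 := h1 0 le_rfl
    have h2 := h1 (((ψ c).re + 1) / (-(ψ b).re)) (by
      apply div_nonneg <;> linarith)
    have h4 : ((ψ c).re + 1) / (-(ψ b).re) * (ψ b).re = -((ψ c).re + 1) := by
      have := hneg.ne
      field_simp
    rw [h4] at h2
    linarith
  let φ0 : M →ₗ[ℂ] ℂ :=
    { toFun := fun a => ((s : ℂ)⁻¹ / 2) * (ψ a + star (ψ (star a)))
      map_add' := fun a b => by simp [mul_add]; ring
      map_smul' := fun c a => by simp [mul_add, mul_left_comm] }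
  have hφ0 : ∀ a : M, IsSelfAdjoint a → φ0 a = ((s⁻¹ * (ψ a).re : ℝ) : ℂ) := by
    intro a ha
    change ((s : ℂ)⁻¹ / 2) * (ψ a + star (ψ (star a))) = _
    rw [ha.star_eq, Complex.star_def, Complex.add_conj]
    push_cast
    ring
  have hφpos : ∀ a : M, 0 ≤ a → 0 ≤ φ0 a := by
    intro a ha
    rw [hφ0 a (.of_nonneg ha), Complex.zero_le_real]
    exact mul_nonneg (inv_nonneg.mpr hspos.le) (hpos a ha)
  refine ⟨PositiveLinearMap.mk₀ φ0 hφpos, ?_, ?_⟩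
  · change (φ0 1).re ≤ 1
    rw [hφ0 1 (.one M), Complex.ofReal_re]
    have h1 : (ψ 1).re ≤ s := by
      by_contra h
      push Not at h
      have : Nontrivial M := ⟨x0, 0, fun h0 => hx0 (by rw [h0, map_zero])⟩
      have h2 := hψ1 (((s / (ψ 1).re : ℝ) : ℂ) • (1 : M)) (by
        rw [mem_ball_zero_iff, norm_smul, CStarRing.norm_one, mul_one, Complex.norm_real,
          Real.norm_of_nonneg (by apply div_nonneg <;> linarith), div_lt_one (by linarith)]
        exact h)
      rw [map_smul, smul_eq_mul] at h2
      change ((((s / (ψ 1).re : ℝ) : ℂ)) * ψ 1).re < s at h2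
      rw [Complex.re_ofReal_mul, div_mul_cancel₀ _ (by linarith)] at h2
      exact lt_irrefl _ h2
    rw [inv_mul_le_one₀ hspos]
    exact h1
  · intro x
    change _ ≤ (φ0 _).re
    by_cases hx : f x = 0
    · rw [hx]
      simpa using (Complex.nonneg_iff.mp (hφpos _ (star_mul_self_nonneg x))).1
    · have h1 := hψ2 _ (hnorm x hx)
      rw [hφ0 _ (.star_mul_self x), Complex.ofReal_re]
      have h2 : star ((f x)⁻¹ • x) * ((f x)⁻¹ • x) = (((‖f x‖ ^ 2)⁻¹ : ℝ) : ℂ) • (star x * x) := by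
        rw [star_smul, smul_mul_assoc, mul_smul_comm, smul_smul]
        congr 1
        rw [star_inv₀, ← mul_inv, Complex.star_def, Complex.conj_mul']
        push_cast; rfl
      rw [h2, map_smul, smul_eq_mul] at h1
      change s ≤ ((((‖f x‖ ^ 2)⁻¹ : ℝ) : ℂ) * _).re at h1
      rw [Complex.re_ofReal_mul] at h1
      have h3 : 0 < ‖f x‖ ^ 2 := by positivity
      rw [le_inv_mul_iff₀ hspos]
      rw [le_inv_mul_iff₀ h3] at h1
      linarith


lemma vf_unital {M : Type u} [CStarAlgebra M] (f : M →L[ℂ] ℂ) (hf : ‖f‖ = 1) :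
    ∃ (H : Type u) (_ : NormedAddCommGroup H) (_ : InnerProductSpace ℂ H) (_ : CompleteSpace H)
      (π : M →⋆ₙₐ[ℂ] (H →L[ℂ] H)) (ξ η : H), (∀ x, f x = ⟪η, π x ξ⟫_ℂ) ∧ ‖ξ‖ * ‖η‖ ≤ 1 := by
  let _ := CStarAlgebra.spectralOrder M
  have _ := CStarAlgebra.spectralOrderedRing M
  obtain ⟨φ, h1, h2⟩ := vf_pos f hf
  let f0 : φ.PreGNS →L[ℂ] ℂ := (f.toLinearMap ∘ₗ φ.ofPreGNS.toLinearMap).mkContinuous 1 (by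
    intro x
    rw [one_mul, PositiveLinearMap.preGNS_norm_def]
    apply Real.le_sqrt_of_sq_le
    exact h2 _)
  have hf0 : ‖f0‖ ≤ 1 := LinearMap.mkContinuous_norm_le _ zero_le_one _
  let f1 : φ.GNS →L[ℂ] ℂ := f0.extend (UniformSpace.Completion.toComplL : φ.PreGNS →L[ℂ] φ.GNS)
  have hf1 : ∀ x : φ.PreGNS, f1 (x : φ.GNS) = f0 x := fun x =>
    ContinuousLinearMap.extend_eq _ UniformSpace.Completion.denseRange_coe
      (UniformSpace.Completion.isUniformInducing_coe _) x
  have hf1n : ‖f1‖ ≤ 1 := by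
    refine ContinuousLinearMap.opNorm_le_bound _ zero_le_one ?_
    intro x
    induction x using UniformSpace.Completion.induction_on with
    | hp => exact isClosed_le (by fun_prop) (by fun_prop)
    | ih x =>
      rw [hf1, UniformSpace.Completion.norm_coe]
      exact f0.le_of_opNorm_le hf0 x
  refine ⟨φ.GNS, inferInstance, inferInstance, inferInstance, φ.gnsNonUnitalStarAlgHom,
    (φ.toPreGNS 1 : φ.PreGNS), (InnerProductSpace.toDual ℂ φ.GNS).symm f1, ?_, ?_⟩
  · intro x
    rw [InnerProductSpace.toDual_symm_apply, PositiveLinearMap.gnsNonUnitalStarAlgHom_apply_coe, hf1]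
    simp [f0]
  · rw [LinearIsometryEquiv.norm_map, UniformSpace.Completion.norm_coe,
      PositiveLinearMap.preGNS_norm_def]
    refine mul_le_one₀ ?_ (norm_nonneg _) hf1n
    refine Real.sqrt_le_one.mpr ?_
    simpa using h1

theorem vf_rep {N : Type u} [NonUnitalCStarAlgebra N] (f : Dl N) :
    ∃ (H : Type u) (_ : NormedAddCommGroup H) (_ : InnerProductSpace ℂ H) (_ : CompleteSpace H)
      (π : N →⋆ₙₐ[ℂ] (H →L[ℂ] H)) (ξ η : H), (∀ x, f x = ⟪η, π x ξ⟫_ℂ) ∧ ‖ξ‖ * ‖η‖ ≤ ‖f‖ := by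
  by_cases hf : ‖f‖ = 0
  · have hf0 := (ContinuousLinearMap.opNorm_zero_iff _).mp hf
    exact ⟨EuclideanSpace ℂ PEmpty.{u+1}, inferInstance, inferInstance, inferInstance, 0, 0, 0,
      by simp [hf0], by simp⟩
  let ι : N →⋆ₙₐ[ℂ] Unitization ℂ N := Unitization.inrNonUnitalStarAlgHom ℂ N
  let p : Submodule ℂ (Unitization ℂ N) := LinearMap.range (ι : N →ₗ[ℂ] Unitization ℂ N)
  have hι : ∀ x, ‖ι x‖ = ‖x‖ := fun x => Unitization.norm_inr x
  let e : N ≃ₗᵢ[ℂ] p := 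
    { LinearEquiv.ofInjective (ι : N →ₗ[ℂ] Unitization ℂ N) Unitization.inr_injective with 
      norm_map' := hι }
  obtain ⟨g, hg, hgn⟩ := exists_extension_norm_eq p 
    (f.comp (e.symm : p →L[ℂ] N) : p →L[ℂ] ℂ)
  have hgn' : ‖g‖ = ‖f‖ := by
    rw [hgn]
    exact f.opNorm_comp_linearIsometryEquiv e.symm
  have hgf : ∀ x, g (ι x) = f x := by
    intro x
    have h1 := hg (e x)
    have h2 : ((e x : p) : Unitization ℂ N) = ι x := rfl
    rw [h2] at h1
    rw [h1]
    simp
  obtain ⟨H, _, _, _, π, ξ, η, h1, h2⟩ := vf_unital (((‖f‖⁻¹ : ℝ) : ℂ) • g) (by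
    rw [norm_smul, Complex.norm_real, norm_inv, norm_norm, hgn', inv_mul_cancel₀ hf])
  refine ⟨H, inferInstance, inferInstance, inferInstance, π.comp ι, ξ, ((‖f‖ : ℝ) : ℂ) • η, ?_, ?_⟩
  · intro x
    have h3 := h1 (ι x)
    rw [_root_.smul_apply, hgf, smul_eq_mul] at h3
    rw [inner_smul_left, Complex.conj_ofReal]
    change _ = _ * ⟪η, π (ι x) ξ⟫_ℂ
    rw [← h3, ← mul_assoc, ← Complex.ofReal_mul, mul_inv_cancel₀ hf, Complex.ofReal_one, one_mul]
  · rw [norm_smul, Complex.norm_real, norm_norm]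
    nlinarith [norm_nonneg f]

end VF

section Coef
open scoped InnerProductSpace ENNReal

variable {N : Type u} [NonUnitalCStarAlgebra N]
variable {H : Type u} [NormedAddCommGroup H] [InnerProductSpace ℂ H] [CompleteSpace H]

/-- coefficient functional of a representation -/
def coef (π : N →⋆ₙₐ[ℂ] (H →L[ℂ] H)) (η ξ : H) : Dl N :=
  LinearMap.mkContinuous
    { toFun := fun x => ⟪η, π x ξ⟫_ℂ
      map_add' := fun x y => by simp
      map_smul' := fun c x => by simp } (‖η‖ * ‖ξ‖) (by
    intro x
    calc ‖⟪η, π x ξ⟫_ℂ‖ ≤ ‖η‖ * ‖π x ξ‖ := norm_inner_le_norm _ _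
      _ ≤ ‖η‖ * (‖π x‖ * ‖ξ‖) := by gcongr; exact (π x).le_opNorm ξ
      _ ≤ ‖η‖ * (‖x‖ * ‖ξ‖) := by gcongr; exact NonUnitalStarAlgHom.norm_apply_le π x
      _ = _ := by ring)

variable (π : N →⋆ₙₐ[ℂ] (H →L[ℂ] H))

lemma coef_apply (η ξ : H) (x : N) : coef π η ξ x = ⟪η, π x ξ⟫_ℂ := rfl

lemma coef_norm_le (η ξ : H) : ‖coef π η ξ‖ ≤ ‖η‖ * ‖ξ‖ :=
  LinearMap.mkContinuous_norm_le _ (by positivity) _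

lemma coef_add_left (η η' ξ : H) : coef π (η + η') ξ = coef π η ξ + coef π η' ξ := by
  ext x; simp [coef_apply]

lemma coef_smul_left (c : ℂ) (η ξ : H) :
    coef π (c • η) ξ = (starRingEnd ℂ c) • coef π η ξ := by
  ext x; simp [coef_apply, mul_comm]

lemma coef_add_right (η ξ ξ' : H) : coef π η (ξ + ξ') = coef π η ξ + coef π η ξ' := by
  ext x; simp [coef_apply]

lemma coef_smul_right (c : ℂ) (η ξ : H) : coef π η (c • ξ) = c • coef π η ξ := by
  ext x; simp [coef_apply]

lemma rep_adj (x : N) (η ξ : H) : ⟪π x η, ξ⟫_ℂ = ⟪η, π (star x) ξ⟫_ℂ := by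
  rw [map_star, ContinuousLinearMap.star_eq_adjoint, ContinuousLinearMap.adjoint_inner_right]

/-- sesquilinear version of `F ∘ coef` -/
def bigB (F : Dl (Dl N)) : H →L⋆[ℂ] H →L[ℂ] ℂ :=
  LinearMap.mkContinuous₂
    (LinearMap.mk₂'ₛₗ (starRingEnd ℂ) (RingHom.id ℂ) (fun η ξ => F (coef π η ξ))
      (fun η η' ξ => by simp [coef_add_left])
      (fun c η ξ => by simp [coef_smul_left])
      (fun η ξ ξ' => by simp [coef_add_right])
      (fun c η ξ => by simp [coef_smul_right]))
    ‖F‖ (by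
      intro η ξ
      calc ‖F (coef π η ξ)‖ ≤ ‖F‖ * ‖coef π η ξ‖ := F.le_opNorm _
        _ ≤ ‖F‖ * (‖η‖ * ‖ξ‖) := by gcongr; exact coef_norm_le π η ξ
        _ = _ := by ring)

/-- the normal extension of `π` to the bidual -/
def bigT (F : Dl (Dl N)) : H →L[ℂ] H :=
  ContinuousLinearMap.adjoint (InnerProductSpace.continuousLinearMapOfBilin (bigB π F))

lemma bigT_inner (F : Dl (Dl N)) (η ξ : H) : ⟪η, bigT π F ξ⟫_ℂ = F (coef π η ξ) := by
  rw [bigT, ContinuousLinearMap.adjoint_inner_right,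
    InnerProductSpace.continuousLinearMapOfBilin_apply]
  rfl

lemma bigT_norm_le (F : Dl (Dl N)) : ‖bigT π F‖ ≤ ‖F‖ := by
  refine ContinuousLinearMap.opNorm_le_bound _ (norm_nonneg _) fun ξ => ?_
  have h1 : ‖bigT π F ξ‖ * ‖bigT π F ξ‖ ≤ (‖F‖ * ‖ξ‖) * ‖bigT π F ξ‖ := by
    calc ‖bigT π F ξ‖ * ‖bigT π F ξ‖ = ‖⟪bigT π F ξ, bigT π F ξ⟫_ℂ‖ := by
          rw [inner_self_eq_norm_sq_to_K, ← sq]; simp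
      _ = ‖F (coef π (bigT π F ξ) ξ)‖ := by rw [bigT_inner]
      _ ≤ ‖F‖ * ‖coef π (bigT π F ξ) ξ‖ := F.le_opNorm _
      _ ≤ ‖F‖ * (‖bigT π F ξ‖ * ‖ξ‖) := by gcongr; exact coef_norm_le π _ _
      _ = _ := by ring
  by_cases h : ‖bigT π F ξ‖ = 0
  · rw [h]; positivity
  · exact le_of_mul_le_mul_right h1 (lt_of_le_of_ne (norm_nonneg _) (Ne.symm h))

lemma bigT_add (F G : Dl (Dl N)) : bigT π (F + G) = bigT π F + bigT π G := by
  ext ξ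
  refine ext_inner_left ℂ fun η => ?_
  simp [bigT_inner, inner_add_right]

lemma bigT_smul (c : ℂ) (F : Dl (Dl N)) : bigT π (c • F) = c • bigT π F := by
  ext ξ
  refine ext_inner_left ℂ fun η => ?_
  simp [bigT_inner, inner_smul_right]

lemma bigT_mul (F G : Dl (Dl N)) : bigT π (arensMul N F G) = bigT π F * bigT π G := by
  ext ξ
  refine ext_inner_left ℂ fun η => ?_
  rw [bigT_inner]
  change F (arT _ G _) = ⟪η, bigT π F (bigT π G ξ)⟫_ℂ
  rw [bigT_inner]
  congr 1
  ext x
  rw [arT_apply, coef_apply]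
  have : (coef π η ξ).comp (ContinuousLinearMap.mul ℂ N x) = coef π (π (star x) η) ξ := by
    ext y
    simp [coef_apply, rep_adj]
  rw [this, ← bigT_inner, rep_adj, star_star]

/-- the involution on the dual -/
def dStar (f : Dl N) : Dl N :=
  LinearMap.mkContinuous
    { toFun := fun x => star (f (star x))
      map_add' := fun x y => by simp
      map_smul' := fun c x => by simp } ‖f‖ (by
    intro x
    change ‖star (f (star x))‖ ≤ _
    rw [norm_star]
    simpa using f.le_opNorm (star x))

/-- the involution on the bidual -/
def ddStar (F : Dl (Dl N)) : Dl (Dl N) :=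
  LinearMap.mkContinuous
    { toFun := fun f => star (F (dStar f))
      map_add' := fun f g => by
        have : dStar (f + g) = dStar f + dStar g := by ext x; simp [dStar]
        simp [this]
      map_smul' := fun c f => by
        have : dStar (c • f) = star c • dStar f := by ext x; simp [dStar]
        simp [this] } ‖F‖ (by
    intro f
    change ‖star (F (dStar f))‖ ≤ _
    rw [norm_star]
    refine (F.le_opNorm _).trans ?_
    gcongr
    exact LinearMap.mkContinuous_norm_le _ (norm_nonneg _) _)

lemma bigT_star (F : Dl (Dl N)) : bigT π (ddStar F) = star (bigT π F) := by
  ext ξ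
  refine ext_inner_left ℂ fun η => ?_
  rw [bigT_inner, ContinuousLinearMap.star_eq_adjoint, ContinuousLinearMap.adjoint_inner_right]
  change star (F (dStar (coef π η ξ))) = _
  have : dStar (coef π η ξ) = coef π ξ η := by
    ext x
    change star (⟪η, π (star x) ξ⟫_ℂ) = ⟪ξ, π x η⟫_ℂ
    rw [← rep_adj]
    exact inner_conj_symm _ _
  rw [this, ← bigT_inner]
  exact inner_conj_symm _ _

/-- bundled representation of a functional as a vector functional -/
structure VRep (f : Dl N) : Type (u + 1) where
  H : Type u
  [i1 : NormedAddCommGroup H]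
  [i2 : InnerProductSpace ℂ H]
  [i3 : CompleteSpace H]
  π : N →⋆ₙₐ[ℂ] (H →L[ℂ] H)
  ξ : H
  η : H
  rep : f = coef π η ξ
  le : ‖η‖ * ‖ξ‖ ≤ ‖f‖

attribute [instance] VRep.i1 VRep.i2 VRep.i3

/-- chosen representation -/
def vrep (f : Dl N) : VRep f := by
  have : Nonempty (VRep f) := by
    obtain ⟨H, _, _, _, π, ξ, η, h1, h2⟩ := vf_rep f
    exact ⟨⟨H, π, ξ, η, by ext x; exact h1 x, by rwa [mul_comm]⟩⟩
  exact Classical.choice this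

lemma st_gen {X L : Type u} [NormedAddCommGroup X] [NormedSpace ℂ X] [CompleteSpace X]
    [NonUnitalCStarAlgebra L] (T : X →ₗᵢ[ℂ] L) (m : X → X → X) (hm : ∀ F G, T F * T G = T (m F G))
    (st : X → X) (hst : ∀ F, star (T F) = T (st F)) :
    ∃ (M : Type u) (_ : NonUnitalCStarAlgebra M) (Θ : X ≃ₗᵢ[ℂ] M),
      ∀ F G, Θ.symm (Θ F * Θ G) = m F G := by
  let S : NonUnitalStarSubalgebra ℂ L :=
    { carrier := Set.range T
      add_mem' := by rintro _ _ ⟨F, rfl⟩ ⟨G, rfl⟩; exact ⟨F + G, map_add _ _ _⟩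
      zero_mem' := ⟨0, map_zero _⟩
      mul_mem' := by rintro _ _ ⟨F, rfl⟩ ⟨G, rfl⟩; exact ⟨_, (hm F G).symm⟩
      smul_mem' := by rintro c _ ⟨F, rfl⟩; exact ⟨c • F, map_smul _ _ _⟩
      star_mem' := by rintro _ ⟨F, rfl⟩; exact ⟨_, (hst F).symm⟩ }
  have hcl : IsClosed (S : Set L) := T.isometry.isClosedEmbedding.isClosed_range
  let Θ : X ≃ₗᵢ[ℂ] S :=
    { toFun := fun F => ⟨T F, F, rfl⟩
      map_add' := fun F G => Subtype.ext (map_add _ _ _)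
      map_smul' := fun c F => Subtype.ext (map_smul _ _ _)
      invFun := fun z => z.2.choose
      left_inv := fun F => T.injective (Exists.choose_spec (⟨F, rfl⟩ : ∃ G, T G = T F))
      right_inv := fun z => Subtype.ext z.2.choose_spec
      norm_map' := fun F => T.norm_map F }
  refine ⟨S, inferInstance, Θ, ?_⟩
  intro F G
  rw [LinearIsometryEquiv.symm_apply_eq]
  exact Subtype.ext (hm F G)

lemma st_gen2 {X I : Type u} [NormedAddCommGroup X] [NormedSpace ℂ X] [CompleteSpace X]
    {B : I → Type u} [∀ i, NonUnitalCStarAlgebra (B i)] (t : ∀ i, X → B i)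
    (hadd : ∀ i F G, t i (F + G) = t i F + t i G) (hsmul : ∀ i (c : ℂ) F, t i (c • F) = c • t i F)
    (m : X → X → X) (hm : ∀ i F G, t i F * t i G = t i (m F G))
    (st : X → X) (hst : ∀ i F, star (t i F) = t i (st F))
    (hle : ∀ i F, ‖t i F‖ ≤ ‖F‖) (hge : ∀ F C, (∀ i, ‖t i F‖ ≤ C) → 0 ≤ C → ‖F‖ ≤ C) :
    ∃ (M : Type u) (_ : NonUnitalCStarAlgebra M) (Θ : X ≃ₗᵢ[ℂ] M),
      ∀ F G, Θ.symm (Θ F * Θ G) = m F G := by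
  let T : X →ₗᵢ[ℂ] lp B ∞ :=
    { toFun := fun F => ⟨fun i => t i F, memℓp_infty ⟨‖F‖, by
        rintro _ ⟨f, rfl⟩
        exact hle _ _⟩⟩
      map_add' := fun F G => by ext1; funext i; exact hadd i F G
      map_smul' := fun c F => by ext1; funext i; exact hsmul i c F
      norm_map' := fun F => by
        apply le_antisymm
        · exact lp.norm_le_of_forall_le (norm_nonneg _) fun f => hle _ _
        · exact hge F _ (fun i => lp.norm_apply_le_norm (by simp)
            (⟨fun i => t i F, memℓp_infty ⟨‖F‖, by
              rintro _ ⟨f, rfl⟩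
              exact hle _ _⟩⟩ : lp B ∞) i) (norm_nonneg _) }
  exact st_gen T m (fun F G => by ext1; funext i; exact hm i F G) st
    (fun F => by ext1; funext i; exact hst i F)


/-- bundled C*-algebra quotient of the bidual attached to a functional -/
structure BRep (f : Dl N) : Type (u + 1) where
  B : Type u
  [i : NonUnitalCStarAlgebra B]
  t : Dl (Dl N) → B
  hadd : ∀ F G, t (F + G) = t F + t G
  hsmul : ∀ (c : ℂ) F, t (c • F) = c • t F
  hm : ∀ F G, t F * t G = t (arensMul N F G)
  hst : ∀ F, star (t F) = t (ddStar F)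
  hle : ∀ F, ‖t F‖ ≤ ‖F‖
  hge : ∀ F, ‖F f‖ ≤ ‖t F‖ * ‖f‖
  hl : ∀ F, ∃ w : Dl N, ∀ G, arensMul N F G f = G w
  hr : ∀ F, ∃ w : Dl N, ∀ G, arensMul N G F f = G w

attribute [instance] BRep.i

lemma vrep_ge {f : Dl N} (v : VRep f) (F : Dl (Dl N)) : ‖F f‖ ≤ ‖bigT v.π F‖ * ‖f‖ := by
  calc ‖F f‖ = ‖⟪v.η, bigT v.π F v.ξ⟫_ℂ‖ := by
        rw [bigT_inner, ← v.rep]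
    _ ≤ ‖v.η‖ * ‖bigT v.π F v.ξ‖ := norm_inner_le_norm _ _
    _ ≤ ‖v.η‖ * (‖bigT v.π F‖ * ‖v.ξ‖) := by
        gcongr; exact (bigT v.π F).le_opNorm _
    _ = ‖bigT v.π F‖ * (‖v.η‖ * ‖v.ξ‖) := by ring
    _ ≤ _ := by gcongr; exact v.le

lemma vrep_key {f : Dl N} (v : VRep f) (F G : Dl (Dl N)) : arensMul N F G f =
      ⟪v.η, bigT v.π F (bigT v.π G v.ξ)⟫_ℂ := by
  conv_lhs => rw [v.rep]
  rw [← bigT_inner, bigT_mul]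
  rfl

set_option maxHeartbeats 1000000 in
/-- the algebra attached to a representation -/
def brep1 (f : Dl N) (v : VRep f) : BRep f where
  B := v.H →L[ℂ] v.H
  t := fun F => bigT v.π F
  hadd := fun F G => bigT_add v.π F G
  hsmul := fun F G => bigT_smul v.π F G
  hm := fun F G => (bigT_mul v.π F G).symm
  hst := fun F => (bigT_star v.π F).symm
  hle := fun F => (bigT_norm_le v.π F)
  hge := fun F => vrep_ge v F
  hl := fun F => ⟨coef v.π (ContinuousLinearMap.adjoint (bigT v.π F) v.η) v.ξ, fun G => by
    rw [vrep_key, ← bigT_inner, ContinuousLinearMap.adjoint_inner_left]⟩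
  hr := fun F => ⟨coef v.π v.η (bigT v.π F v.ξ), fun G => by
    rw [vrep_key, ← bigT_inner]⟩

lemma sherman_takeda_aux (b : ∀ f : Dl N, BRep f) :
    ∃ (M : Type u) (_ : NonUnitalCStarAlgebra M) (Θ : Dl (Dl N) ≃ₗᵢ[ℂ] M),
      ∀ (v : Dl N) (z : M), (∃ w : Dl N, ∀ y, Θ.symm (z * y) v = Θ.symm y w) ∧
        (∃ w : Dl N, ∀ y, Θ.symm (y * z) v = Θ.symm y w) := by
  obtain ⟨M, _, Θ, hmul⟩ := st_gen2 (X := Dl (Dl N)) (B := fun f : Dl N => (b f).B)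
    (fun f F => (b f).t F) (fun f F G => (b f).hadd F G)
    (fun f c F => (b f).hsmul c F)
    (fun F G => arensMul N F G) (fun f F G => (b f).hm F G)
    ddStar (fun f F => (b f).hst F) (fun f F => (b f).hle F) (by
      intro F C hC hC0
      refine ContinuousLinearMap.opNorm_le_bound _ hC0 fun f => ?_
      refine ((b f).hge F).trans ?_
      gcongr
      exact hC f)
  refine ⟨M, inferInstance, Θ, fun v z => ?_⟩
  obtain ⟨F, rfl⟩ := Θ.surjective z
  constructor
  · obtain ⟨w, hw⟩ := (b v).hl F
    refine ⟨w, fun y => ?_⟩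
    obtain ⟨G, rfl⟩ := Θ.surjective y
    rw [hmul, hw, LinearIsometryEquiv.symm_apply_apply]
  · obtain ⟨w, hw⟩ := (b v).hr F
    refine ⟨w, fun y => ?_⟩
    obtain ⟨G, rfl⟩ := Θ.surjective y
    rw [hmul, hw, LinearIsometryEquiv.symm_apply_apply]

theorem sherman_takeda (N : Type u) [NonUnitalCStarAlgebra N] :
    ∃ (M : Type u) (_ : NonUnitalCStarAlgebra M) (Θ : Dl (Dl N) ≃ₗᵢ[ℂ] M),
      ∀ (v : Dl N) (z : M), (∃ w : Dl N, ∀ y, Θ.symm (z * y) v = Θ.symm y w) ∧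
        (∃ w : Dl N, ∀ y, Θ.symm (y * z) v = Θ.symm y w) :=
  sherman_takeda_aux fun f => brep1 f (vrep f)

end Coef

section Proj
open scoped InnerProductSpace

variable {N : Type u} [NonUnitalCStarAlgebra N]
variable {H : Type u} [NormedAddCommGroup H] [InnerProductSpace ℂ H] [CompleteSpace H]
variable (π : N →⋆ₙₐ[ℂ] (H →L[ℂ] H))

lemma coef_sub_left (η η' ξ : H) : coef π (η - η') ξ = coef π η ξ - coef π η' ξ := by
  ext x; simp [coef_apply]

lemma coef_sub_right (η ξ ξ' : H) : coef π η (ξ - ξ') = coef π η ξ - coef π η ξ' := by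
  ext x; simp [coef_apply]

lemma coef_cont_left (ξ : H) : Continuous fun η => coef π η ξ := by
  refine (LipschitzWith.of_dist_le_mul (K := ‖ξ‖₊) fun a b => ?_).continuous
  rw [dist_eq_norm, dist_eq_norm, ← coef_sub_left, mul_comm]
  exact coef_norm_le π _ _

lemma coef_cont_right (η : H) : Continuous fun ξ => coef π η ξ := by
  refine (LipschitzWith.of_dist_le_mul (K := ‖η‖₊) fun a b => ?_).continuous
  rw [dist_eq_norm, dist_eq_norm, ← coef_sub_right]
  exact coef_norm_le π _ _

lemma proj_comm (K : Submodule ℂ H) [K.HasOrthogonalProjection]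
    (hK : ∀ x, ∀ ξ ∈ K, π x ξ ∈ K) (x : N) (ξ : H) :
    K.starProjection (π x ξ) = π x (K.starProjection ξ) := by
  refine Submodule.eq_starProjection_of_mem_of_inner_eq_zero
    (hK x _ (Submodule.starProjection_apply_mem K ξ)) fun w hw => ?_
  rw [← map_sub, rep_adj]
  exact Submodule.starProjection_inner_eq_zero ξ _ (hK _ _ hw)

lemma coef_proj (K : Submodule ℂ H) [K.HasOrthogonalProjection]
    (hK : ∀ x, ∀ ξ ∈ K, π x ξ ∈ K) (η ξ : H) :
    coef π (K.starProjection η) ξ = coef π η (K.starProjection ξ) := by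
  ext x
  rw [coef_apply, coef_apply, ← proj_comm π K hK]
  exact Submodule.inner_starProjection_left_eq_right K _ _

/-- invariance of a set of functionals under translations -/
def TInv (V : Submodule ℂ (Dl N)) : Prop :=
  ∀ v ∈ V, ∀ (z : N) (w : Dl N), ((∀ y, w y = v (z * y)) ∨ (∀ y, w y = v (y * z))) → w ∈ V

/-- vectors all of whose coefficients lie in `V` -/
def HV (V : Submodule ℂ (Dl N)) : Submodule ℂ H where
  carrier := {ξ | ∀ ζ, coef π ζ ξ ∈ V}
  add_mem' := fun {a b} ha hb ζ => by rw [coef_add_right]; exact V.add_mem (ha ζ) (hb ζ)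
  zero_mem' := fun ζ => by
    have : coef π ζ 0 = 0 := by ext x; simp [coef_apply]
    rw [this]; exact V.zero_mem
  smul_mem' := fun c a ha ζ => by rw [coef_smul_right]; exact V.smul_mem c (ha ζ)

/-- the left vectors whose coefficients lie in `V` -/
def ZV (V : Submodule ℂ (Dl N)) (ξ : H) : Submodule ℂ H where
  carrier := {ζ | coef π ζ ξ ∈ V}
  add_mem' := fun {a b} ha hb => by
    change coef π (a + b) ξ ∈ V
    rw [coef_add_left]; exact V.add_mem ha hb
  zero_mem' := by
    change coef π 0 ξ ∈ V
    have : coef π 0 ξ = 0 := by ext x; simp [coef_apply]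
    rw [this]; exact V.zero_mem
  smul_mem' := fun c a ha => by
    change coef π (c • a) ξ ∈ V
    rw [coef_smul_left]; exact V.smul_mem _ ha

variable {V : Submodule ℂ (Dl N)}

lemma HV_closed (hVc : IsClosed (V : Set (Dl N))) : IsClosed (HV π V : Set H) := by
  have : (HV π V : Set H) = ⋂ ζ, (fun ξ => coef π ζ ξ) ⁻¹' (V : Set (Dl N)) := by
    ext ξ; simp [HV]
  rw [this]
  exact isClosed_iInter fun ζ => hVc.preimage (coef_cont_right π ζ)

lemma ZV_closed (hVc : IsClosed (V : Set (Dl N))) (ξ : H) : IsClosed (ZV π V ξ : Set H) :=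
  hVc.preimage (coef_cont_left π ξ)

lemma HV_inv (hV : TInv V) (x : N) (ξ : H) (hξ : ξ ∈ HV π V) : π x ξ ∈ HV π V := by
  intro ζ
  refine hV _ (hξ ζ) x _ (Or.inr fun y => ?_)
  simp [coef_apply]

lemma ZV_inv (hV : TInv V) (ξ : H) (x : N) (ζ : H) (hζ : ζ ∈ ZV π V ξ) : π x ζ ∈ ZV π V ξ := by
  refine hV _ hζ (star x) _ (Or.inl fun y => ?_)
  simp only [coef_apply]
  rw [rep_adj]
  simp

lemma coef_zero_of_orth (hVc : IsClosed (V : Set (Dl N))) (hV : TInv V) (η ξ : H) (hξ : ∀ w ∈ HV π V, ⟪ξ, w⟫_ℂ = 0) (h : coef π η ξ ∈ V) :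
    coef π η ξ = 0 := by
  have : CompleteSpace (ZV π V ξ) := (ZV_closed π hVc ξ).completeSpace_coe
  have hI := ZV_inv π hV ξ
  have h1 : (ZV π V ξ).starProjection ξ ∈ HV π V := by
    intro ζ
    rw [← coef_proj π _ hI]
    exact Submodule.starProjection_apply_mem (ZV π V ξ) ζ
  have h2 := hξ _ h1
  rw [← Submodule.inner_starProjection_left_eq_right] at h2
  have h3 : (ZV π V ξ).starProjection ξ = 0 := by
    have h5 : (ZV π V ξ).starProjection ((ZV π V ξ).starProjection ξ) =
        (ZV π V ξ).starProjection ξ :=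
      Submodule.starProjection_eq_self_iff.mpr (Submodule.starProjection_apply_mem _ _)
    rw [Submodule.inner_starProjection_left_eq_right, ← h5,
      ← Submodule.inner_starProjection_left_eq_right] at h2
    exact inner_self_eq_zero.mp h2
  have h4 : (ZV π V ξ).starProjection η = η := Submodule.starProjection_eq_self_iff.mpr h
  rw [← h4, coef_proj π _ hI, h3]
  ext x; simp [coef_apply]


variable {K : Type u} [NormedAddCommGroup K] [InnerProductSpace ℂ K] [CompleteSpace K]
variable (σ : N →⋆ₙₐ[ℂ] (K →L[ℂ] K))

/-- operator part of the direct sum -/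
def dsumOp (x : N) : WithLp 2 (H × K) →L[ℂ] WithLp 2 (H × K) :=
  ((WithLp.prodContinuousLinearEquiv 2 ℂ H K).symm : H × K →L[ℂ] WithLp 2 (H × K)) ∘L
    ((π x).prodMap (σ x)) ∘L
    ((WithLp.prodContinuousLinearEquiv 2 ℂ H K) : WithLp 2 (H × K) →L[ℂ] H × K)

lemma dsumOp_fst (x : N) (w : WithLp 2 (H × K)) : (dsumOp π σ x w).fst = π x w.fst := rfl
lemma dsumOp_snd (x : N) (w : WithLp 2 (H × K)) : (dsumOp π σ x w).snd = σ x w.snd := rfl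

lemma dsum_ext {w w' : WithLp 2 (H × K)} (h1 : w.fst = w'.fst) (h2 : w.snd = w'.snd) : w = w' := by
  apply (WithLp.equiv 2 (H × K)).injective
  exact Prod.ext h1 h2

/-- direct sum of representations -/
def dsum : N →⋆ₙₐ[ℂ] (WithLp 2 (H × K) →L[ℂ] WithLp 2 (H × K)) where
  toFun := dsumOp π σ
  map_smul' := fun c x => by
    ext1 w
    apply dsum_ext
    · simp [dsumOp_fst]
    · simp [dsumOp_snd]
  map_zero' := by
    ext1 w
    apply dsum_ext
    · simp [dsumOp_fst]
    · simp [dsumOp_snd]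
  map_add' := fun x y => by
    ext1 w
    apply dsum_ext
    · simp [dsumOp_fst]
    · simp [dsumOp_snd]
  map_mul' := fun x y => by
    ext1 w
    apply dsum_ext
    · simp [dsumOp_fst]
    · simp [dsumOp_snd]
  map_star' := fun x => by
    ext1 w
    refine ext_inner_left ℂ fun w' => ?_
    rw [ContinuousLinearMap.star_eq_adjoint, ContinuousLinearMap.adjoint_inner_right]
    simp only [WithLp.prod_inner_apply]
    change ⟪w'.fst, π (star x) w.fst⟫_ℂ + ⟪w'.snd, σ (star x) w.snd⟫_ℂ =
      ⟪π x w'.fst, w.fst⟫_ℂ + ⟪σ x w'.snd, w.snd⟫_ℂ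
    rw [rep_adj, rep_adj]

lemma coef_dsum (w w' : WithLp 2 (H × K)) : coef (dsum π σ) w w' =
    coef π w.fst w'.fst + coef σ w.snd w'.snd := by
  ext x
  rw [coef_apply, WithLp.prod_inner_apply]
  rfl

lemma dsum_zero (hVc : IsClosed (V : Set (Dl N))) (hV : TInv V) (η ξ : H) (η' ξ' : K)
    (hξ : ∀ w ∈ HV π V, ⟪ξ, w⟫_ℂ = 0) (hξ' : ∀ w ∈ HV σ V, ⟪ξ', w⟫_ℂ = 0)
    (h : coef π η ξ - coef σ η' ξ' ∈ V) : coef π η ξ = coef σ η' ξ' := by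
  have e : coef (dsum π σ) (WithLp.toLp 2 (η, -η')) (WithLp.toLp 2 (ξ, ξ')) =
      coef π η ξ - coef σ η' ξ' := by
    rw [coef_dsum]
    change coef π η ξ + coef σ (-η') ξ' = _
    rw [sub_eq_add_neg]
    congr 1
    ext x; simp [coef_apply]
  rw [← sub_eq_zero, ← e]
  refine coef_zero_of_orth (dsum π σ) hVc hV _ _ (fun w hw => ?_) (by rwa [e])
  have h1 : w.fst ∈ HV π V := fun ζ => by
    have := hw (WithLp.toLp 2 (ζ, 0))
    rw [coef_dsum] at this
    have h0 : coef σ (0 : K) w.snd = 0 := by ext x; simp [coef_apply]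
    change coef π ζ w.fst + coef σ (0 : K) w.snd ∈ V at this
    rwa [h0, add_zero] at this
  have h2 : w.snd ∈ HV σ V := fun ζ => by
    have := hw (WithLp.toLp 2 (0, ζ))
    rw [coef_dsum] at this
    have h0 : coef π (0 : H) w.fst = 0 := by ext x; simp [coef_apply]
    change coef π (0 : H) w.fst + coef σ ζ w.snd ∈ V at this
    rwa [h0, zero_add] at this
  rw [WithLp.prod_inner_apply]
  change ⟪ξ, w.fst⟫_ℂ + ⟪ξ', w.snd⟫_ℂ = 0
  rw [hξ _ h1, hξ' _ h2, add_zero]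

lemma vrep_dec (hVc : IsClosed (V : Set (Dl N))) (hV : TInv V) (c : Dl N) :
    ∃ v ∈ V, ∃ (H : Type u) (_ : NormedAddCommGroup H) (_ : InnerProductSpace ℂ H)
      (_ : CompleteSpace H) (π : N →⋆ₙₐ[ℂ] (H →L[ℂ] H)) (η ξ : H),
      (∀ w ∈ HV π V, ⟪ξ, w⟫_ℂ = 0) ∧ c - v = coef π η ξ ∧ ‖v‖ + ‖c - v‖ ≤ ‖c‖ := by
  obtain ⟨H, π, ξ, η, hc, hle⟩ := vrep c
  have : CompleteSpace (HV π V) := (HV_closed π hVc).completeSpace_coe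
  have hI := HV_inv π hV
  set p := (HV π V).starProjection with hp
  have pp : ∀ ζ, p (p ζ) = p ζ := fun ζ =>
    Submodule.starProjection_eq_self_iff.mpr (Submodule.starProjection_apply_mem _ _)
  have hs : c - coef π η (p ξ) = coef π η (ξ - p ξ) := by rw [hc, coef_sub_right]
  refine ⟨coef π η (p ξ), Submodule.starProjection_apply_mem (HV π V) ξ η, H, inferInstance,
    inferInstance, inferInstance, π, η, ξ - p ξ,
    fun w hw => Submodule.starProjection_inner_eq_zero ξ w hw, hs, ?_⟩
  have e1 : coef π η (p ξ) = coef π (p η) (p ξ) := by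
    rw [coef_proj π _ hI, ← hp, pp]
  have e2 : coef π η (ξ - p ξ) = coef π (η - p η) (ξ - p ξ) := by
    rw [coef_sub_left, coef_proj π _ hI, ← hp, map_sub, pp, sub_self]
    ext x; simp [coef_apply]
  have n1 : ‖coef π η (p ξ)‖ ≤ ‖p η‖ * ‖p ξ‖ := by rw [e1]; exact coef_norm_le π _ _
  have n2 : ‖coef π η (ξ - p ξ)‖ ≤ ‖η - p η‖ * ‖ξ - p ξ‖ := by
    rw [e2]; exact coef_norm_le π _ _
  have py : ∀ ζ, ‖ζ‖ ^ 2 = ‖p ζ‖ ^ 2 + ‖ζ - p ζ‖ ^ 2 := fun ζ => by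
    have := Submodule.norm_sq_eq_add_norm_sq_starProjection ζ (HV π V)
    rwa [Submodule.starProjection_orthogonal_val] at this
  rw [hs]
  refine (add_le_add n1 n2).trans (le_trans ?_ hle)
  refine abs_le_of_sq_le_sq' ?_ (by positivity) |>.2
  rw [mul_pow, py η, py ξ]
  nlinarith [sq_nonneg (‖p η‖ * ‖ξ - p ξ‖ - ‖η - p η‖ * ‖p ξ‖)]

theorem le_main (hVc : IsClosed (V : Set (Dl N))) (hV : TInv V) (c : Dl N) :
    ∃ v ∈ V, ∀ a ∈ V, ‖v - a‖ + ‖c - v‖ ≤ ‖c - a‖ := by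
  obtain ⟨v, hv, H, _, _, _, π, η, ξ, ho, he, -⟩ := vrep_dec hVc hV c
  refine ⟨v, hv, fun a ha => ?_⟩
  obtain ⟨v', hv', K, _, _, _, σ, η', ξ', ho', he', hn⟩ := vrep_dec hVc hV (c - a)
  have h := dsum_zero π σ hVc hV η ξ η' ξ' ho ho' (by
    rw [← he, ← he']
    have : c - v - (c - a - v') = a + v' - v := by abel
    rw [this]
    exact V.sub_mem (V.add_mem ha hv') hv)
  rw [← he, ← he'] at h
  have h2 : v' = v - a := by
    have : v - a - v' = (c - a - v') - (c - v) := by abel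
    rw [← h, sub_self, sub_eq_zero] at this
    exact this.symm
  rw [← h, h2] at hn
  exact hn

end Proj

section CstSec

/-- dual of an isometric isomorphism -/
def dlCongr {Y Z : Type u} [NormedAddCommGroup Y] [NormedSpace ℂ Y] [NormedAddCommGroup Z]
    [NormedSpace ℂ Z] (e : Y ≃ₗᵢ[ℂ] Z) : Dl Y ≃ₗᵢ[ℂ] Dl Z where
  toFun := fun f => f.comp (e.symm.toContinuousLinearEquiv : Z →L[ℂ] Y)
  map_add' := fun f g => by ext; simp
  map_smul' := fun c f => by ext; simp
  invFun := fun f => f.comp (e.toContinuousLinearEquiv : Y →L[ℂ] Z)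
  left_inv := fun f => by ext; simp
  right_inv := fun f => by ext; simp
  norm_map' := fun f => by
    refine le_antisymm (ContinuousLinearMap.opNorm_le_bound _ (norm_nonneg _) fun z => ?_)
      (ContinuousLinearMap.opNorm_le_bound _ (norm_nonneg _) fun y => ?_)
    · simpa using f.le_opNorm (e.symm z)
    · simpa using (f.comp (e.symm.toContinuousLinearEquiv : Z →L[ℂ] Y)).le_opNorm (e y)

lemma dlCongr_apply {Y Z : Type u} [NormedAddCommGroup Y] [NormedSpace ℂ Y] [NormedAddCommGroup Z]
    [NormedSpace ℂ Z] (e : Y ≃ₗᵢ[ℂ] Z) (f : Dl Y) (z : Z) : dlCongr e f z = f (e.symm z) := rfl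

lemma dlCongr_symm_apply {Y Z : Type u} [NormedAddCommGroup Y] [NormedSpace ℂ Y]
    [NormedAddCommGroup Z] [NormedSpace ℂ Z] (e : Y ≃ₗᵢ[ℂ] Z) (f : Dl Z) (y : Y) :
    (dlCongr e).symm f y = f (e y) := rfl

/-- being isometric to a C*-algebra -/
def CstP (Y : Type u) [NormedAddCommGroup Y] [NormedSpace ℂ Y] : Prop :=
  ∃ (N : Type u) (_ : NonUnitalCStarAlgebra N), Nonempty (Y ≃ₗᵢ[ℂ] N)

lemma CstP.dd {Y : Type u} [NormedAddCommGroup Y] [NormedSpace ℂ Y] (h : CstP Y) :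
    CstP (Dl (Dl Y)) := by
  obtain ⟨N, _, ⟨e⟩⟩ := h
  obtain ⟨M, _, Θ, -⟩ := sherman_takeda N
  exact ⟨M, inferInstance, ⟨(dlCongr (dlCongr e)).trans Θ⟩⟩

lemma CstP.le {Y : Type u} [NormedAddCommGroup Y] [NormedSpace ℂ Y] (h : CstP Y)
    (c : Dl (Dl (Dl Y))) :
    ∃ v : Dl Y, ∀ a : Dl Y, ‖v - a‖ + ‖c - inclDD (Dl Y) v‖ ≤ ‖c - inclDD (Dl Y) a‖ := by
  obtain ⟨N, _, ⟨e⟩⟩ := h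
  obtain ⟨M, _, Θ, hΘ⟩ := sherman_takeda N
  let E := dlCongr e
  let Φ : M ≃ₗᵢ[ℂ] Dl (Dl Y) := Θ.symm.trans (dlCongr E).symm
  let P : Dl (Dl (Dl Y)) ≃ₗᵢ[ℂ] Dl M := dlCongr (Y := Dl (Dl Y)) (Z := M) Φ.symm
  let J : Dl Y →ₗᵢ[ℂ] Dl M :=
    { toFun := fun w => P (inclDD (Dl Y) w)
      map_add' := fun a b => by simp
      map_smul' := fun a b => by simp
      norm_map' := fun w => by
        change ‖P (inclDD (Dl Y) w)‖ = _
        rw [LinearIsometryEquiv.norm_map, lf_norm_incl] }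
  have hJ : ∀ w y, J w y = Θ.symm y (E w) := fun w y => rfl
  have hc : IsClosed ((LinearMap.range J.toLinearMap : Submodule ℂ (Dl M)) : Set (Dl M)) := by
    rw [LinearMap.coe_range]
    exact J.isometry.isClosedEmbedding.isClosed_range
  obtain ⟨_, ⟨v, rfl⟩, hv⟩ := le_main hc (by
    rintro _ ⟨w, rfl⟩ z w' hw'
    rcases hw' with hw' | hw'
    · obtain ⟨w1, h1⟩ := (hΘ (E w) z).1
      refine ⟨E.symm w1, ?_⟩
      ext y
      change J _ y = _
      rw [hw', hJ, LinearIsometryEquiv.apply_symm_apply, ← h1]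
      rfl
    · obtain ⟨w1, h1⟩ := (hΘ (E w) z).2
      refine ⟨E.symm w1, ?_⟩
      ext y
      change J _ y = _
      rw [hw', hJ, LinearIsometryEquiv.apply_symm_apply, ← h1]
      rfl) (P c)
  refine ⟨v, fun a => ?_⟩
  have h1 := hv (J a) ⟨a, rfl⟩
  change ‖J v - J a‖ + ‖P c - P _‖ ≤ ‖P c - P _‖ at h1
  rwa [← map_sub, LinearIsometry.norm_map, ← map_sub, ← map_sub, LinearIsometryEquiv.norm_map,
    LinearIsometryEquiv.norm_map] at h1

end CstSec

section IdealSec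
variable {A : Type u} [NonUnitalCStarAlgebra A]

lemma ideal_approx (y : A) (hy : IsSelfAdjoint y) (δ : ℝ) (hδ : 0 < δ) :
    ∃ e b : A, IsSelfAdjoint e ∧ e = y * b ∧ ‖y - y * e - e * y + e * y * e‖ ≤ δ := by
  have hpos : ∀ t : ℝ, 0 < t ^ 2 + δ ^ 2 := fun t => by positivity
  have hne : ∀ t : ℝ, t ^ 2 + δ ^ 2 ≠ 0 := fun t => (hpos t).ne'
  let f : ℝ → ℝ := fun t => t / (t ^ 2 + δ ^ 2)
  let g : ℝ → ℝ := fun t => t * f t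
  have hf : Continuous f := by
    apply Continuous.div continuous_id (by fun_prop) hne
  have hg : Continuous g := continuous_id.mul hf
  have hf0 : f 0 = 0 := by simp [f]
  have hg0 : g 0 = 0 := by simp [g]
  have h1 : cfcₙ g y = y * cfcₙ f y := by
    rw [show g = fun t => t * f t from rfl,
      cfcₙ_mul (fun t => t) f y (by fun_prop) rfl hf.continuousOn hf0, cfcₙ_id' ℝ y]
  have h2 : y * cfcₙ g y = cfcₙ (fun t => t * g t) y := by
    rw [cfcₙ_mul (fun t => t) g y (by fun_prop) rfl hg.continuousOn hg0, cfcₙ_id' ℝ y]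
  have h3 : cfcₙ g y * y = cfcₙ (fun t => g t * t) y := by
    rw [cfcₙ_mul g (fun t => t) y hg.continuousOn hg0 (by fun_prop) rfl, cfcₙ_id' ℝ y]
  have h4 : cfcₙ g y * y * cfcₙ g y = cfcₙ (fun t => g t * t * g t) y := by
    rw [h3, cfcₙ_mul (fun t => g t * t) g y (by fun_prop) (by simp) hg.continuousOn hg0]
  refine ⟨cfcₙ g y, cfcₙ f y, cfcₙ_predicate g y, h1, ?_⟩
  have h5 : y - y * cfcₙ g y - cfcₙ g y * y + cfcₙ g y * y * cfcₙ g y =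
      cfcₙ (fun t => t - t * g t - g t * t + g t * t * g t) y := by
    rw [cfcₙ_add (fun t => t - t * g t - g t * t) (fun t => g t * t * g t) y (by fun_prop)
        (by simp) (by fun_prop) (by simp),
      cfcₙ_sub (fun t => t - t * g t) (fun t => g t * t) y (by fun_prop)
        (by simp) (by fun_prop) (by simp),
      cfcₙ_sub (fun t => t) (fun t => t * g t) y (by fun_prop)
        (by simp) (by fun_prop) (by simp), cfcₙ_id' ℝ y, h2, h4, h3]
  rw [h5]
  refine norm_cfcₙ_le fun t _ => ?_
  have e1 : t - t * g t - g t * t + g t * t * g t = t * (δ ^ 2 / (t ^ 2 + δ ^ 2)) ^ 2 := by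
    have := hne t
    simp only [g, f]
    field_simp
    ring
  rw [e1, norm_mul, Real.norm_eq_abs, Real.norm_eq_abs,
    abs_of_nonneg (sq_nonneg (δ ^ 2 / (t ^ 2 + δ ^ 2)))]
  have e2 : δ ^ 2 / (t ^ 2 + δ ^ 2) ≤ 1 := by
    rw [div_le_one (hpos t)]; nlinarith [sq_nonneg t]
  have e3 : 0 ≤ δ ^ 2 / (t ^ 2 + δ ^ 2) := by positivity
  calc |t| * (δ ^ 2 / (t ^ 2 + δ ^ 2)) ^ 2 ≤ |t| * (δ ^ 2 / (t ^ 2 + δ ^ 2)) := by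
        gcongr; nlinarith
    _ ≤ δ := by
        rw [← mul_div_assoc, div_le_iff₀ (hpos t), ← sq_abs t]
        nlinarith [mul_nonneg hδ.le (sq_nonneg (|t| - δ)), abs_nonneg t, sq_nonneg (|t|),
          mul_nonneg hδ.le (sq_nonneg (|t|)), mul_nonneg (sq_nonneg δ) (abs_nonneg t),
          pow_pos hδ 3]

lemma ideal_star (S : Submodule ℂ A) (hS : IsClosed (S : Set A))
    (hl : ∀ a x, x ∈ S → a * x ∈ S) (hr : ∀ a x, x ∈ S → x * a ∈ S) (x : A) (hx : x ∈ S) :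
    star x ∈ S := by
  change star x ∈ (S : Set A)
  rw [← hS.closure_eq, Metric.mem_closure_iff]
  intro ε hε
  obtain ⟨e, b, he, heb, hn⟩ := ideal_approx (star x * x) (IsSelfAdjoint.star_mul_self x)
    ((ε / 2) ^ 2) (by positivity)
  have heS : e ∈ S := by
    rw [heb, mul_assoc]
    exact hl _ _ (hr _ _ hx)
  refine ⟨e * star x, hr _ _ heS, ?_⟩
  have h1 : star x - e * star x = star (x - x * e) := by
    rw [star_sub, star_mul, he.star_eq]
  rw [dist_eq_norm, h1, norm_star]
  have h2 : ‖x - x * e‖ * ‖x - x * e‖ ≤ (ε / 2) ^ 2 := by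
    rw [← CStarRing.norm_star_mul_self, ← h1]
    refine le_of_eq_of_le ?_ hn
    congr 1
    noncomm_ring
  nlinarith [norm_nonneg (x - x * e)]

lemma ideal_cst (S : Submodule ℂ A) (hS : IsClosed (S : Set A))
    (hl : ∀ a x, x ∈ S → a * x ∈ S) (hr : ∀ a x, x ∈ S → x * a ∈ S) : CstP S := by
  let T : NonUnitalStarSubalgebra ℂ A :=
    { S with
      mul_mem' := fun {a b} _ hb => hl a b hb
      star_mem' := fun {a} ha => ideal_star S hS hl hr a ha }
  have : IsClosed (T : Set A) := hS
  exact ⟨T, inferInstance, ⟨{ LinearEquiv.refl ℂ S with norm_map' := fun x => rfl }⟩⟩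

end IdealSec

section FinalSec
variable {A : Type u} [NonUnitalCStarAlgebra A]

/-- quasi-unitary elements -/
def QU (a : A) : Prop := a + star a + a * star a = 0 ∧ a + star a + star a * a = 0

lemma QU.star {a : A} (h : QU a) : QU (star a) := by
  refine ⟨?_, ?_⟩
  · rw [star_star, add_comm (Star.star a)]; exact h.2
  · rw [star_star, add_comm (Star.star a)]; exact h.1

lemma QU.comp {a c : A} (ha : QU a) (hc : QU c) : QU (a + c + a * c) := by
  constructor
  · have : a + c + a * c + Star.star (a + c + a * c) +
        (a + c + a * c) * Star.star (a + c + a * c) =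
        (a + Star.star a + a * Star.star a) + (c + Star.star c + c * Star.star c) +
        a * (c + Star.star c + c * Star.star c) + (c + Star.star c + c * Star.star c) * Star.star a
        + a * (c + Star.star c + c * Star.star c) * Star.star a := by
      simp only [star_add, star_mul]
      noncomm_ring
    rw [this, ha.1, hc.1]; simp
  · have : a + c + a * c + Star.star (a + c + a * c) +
        Star.star (a + c + a * c) * (a + c + a * c) =
        (a + Star.star a + Star.star a * a) + (c + Star.star c + Star.star c * c) +
        Star.star c * (a + Star.star a + Star.star a * a)
        + (a + Star.star a + Star.star a * a) * c
        + Star.star c * (a + Star.star a + Star.star a * a) * c := by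
      simp only [star_add, star_mul]
      noncomm_ring
    rw [this, ha.2, hc.2]; simp

lemma QU.norm_le {a : A} (h : QU a) : ‖a‖ ≤ 2 := by
  have h1 : Star.star a * a = -(a + Star.star a) := by
    rw [eq_neg_iff_add_eq_zero, add_comm]; exact h.2
  have h2 : ‖a‖ * ‖a‖ ≤ ‖a‖ + ‖a‖ := by
    rw [← CStarRing.norm_star_mul_self, h1, norm_neg]
    refine (norm_add_le _ _).trans ?_
    rw [norm_star]
  nlinarith [norm_nonneg a]

lemma qu_zero : QU (0 : A) := by constructor <;> simp

/-- quasi-unitaries act contractively -/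
def Ctr (M : BMod A) : Prop :=
  ∀ a, QU a → ∀ x : M.X, ‖x + M.act.l a x‖ ≤ ‖x‖ ∧ ‖x + M.act.r a x‖ ≤ ‖x‖

lemma Ctr.dual {M : BMod A} (h : Ctr M) : Ctr M.dualObj := by
  intro a ha f₀
  let f : Dl M.X := f₀
  constructor
  · refine ContinuousLinearMap.opNorm_le_bound (E := M.X) _ (norm_nonneg _) fun x => ?_
    change ‖f x + M.act.dualMod.l a f x‖ ≤ ‖f‖ * ‖x‖
    rw [Bimodule.dualMod_l_apply, ← map_add f]
    exact (ContinuousLinearMap.le_opNorm f _).trans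
      (mul_le_mul_of_nonneg_left (h a ha x).2 (norm_nonneg _))
  · refine ContinuousLinearMap.opNorm_le_bound (E := M.X) _ (norm_nonneg _) fun x => ?_
    change ‖f x + M.act.dualMod.r a f x‖ ≤ ‖f‖ * ‖x‖
    rw [Bimodule.dualMod_r_apply, ← map_add f]
    exact (ContinuousLinearMap.le_opNorm f _).trans
      (mul_le_mul_of_nonneg_left (h a ha x).1 (norm_nonneg _))

lemma Ctr.iter {M : BMod A} (h : Ctr M) : ∀ n, Ctr (M.iter n)
  | 0 => h
  | n + 1 => (Ctr.iter h n).dual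

lemma ctr_ideal (I : ClosedIdeal A) : Ctr I.toBMod := by
  intro a ha x
  have key1 : ∀ x : A, ‖x + a * x‖ ≤ ‖x‖ := fun x => by
    refine abs_le_of_sq_le_sq' ?_ (norm_nonneg _) |>.2
    rw [sq, sq, ← CStarRing.norm_star_mul_self, ← CStarRing.norm_star_mul_self]
    have : Star.star (x + a * x) * (x + a * x) =
      Star.star x * x + Star.star x * (a + Star.star a + Star.star a * a) * x := by
      simp only [star_add, star_mul]
      noncomm_ring
    rw [this, ha.2]; simp
  have key2 : ∀ x : A, ‖x + x * a‖ ≤ ‖x‖ := fun x => by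
    refine abs_le_of_sq_le_sq' ?_ (norm_nonneg _) |>.2
    rw [sq, sq, ← CStarRing.norm_self_mul_star, ← CStarRing.norm_self_mul_star]
    have : (x + x * a) * Star.star (x + x * a) =
      x * Star.star x + x * (a + Star.star a + a * Star.star a) * Star.star x := by
      simp only [star_add, star_mul]
      noncomm_ring
    rw [this, ha.1]; simp
  let y : I.car := x
  exact ⟨key1 (y : A), key2 (y : A)⟩

lemma qu_inner {M : BMod A} (hM : Ctr M)
    (hLE : ∀ c : Dl (Dl M.X), ∃ v : M.X, ∀ a : M.X,
      ‖v - a‖ + ‖c - inclDD M.X v‖ ≤ ‖c - inclDD M.X a‖)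
    (D : A →L[ℂ] M.X) (hD : IsDerivation M D) :
    ∃ x : M.X, ∀ a, QU a → D a = M.act.l a x - M.act.r a x := by
  let ι := {a : A // QU a}
  let P : A → M.X →L[ℂ] M.X := fun a => ContinuousLinearMap.id ℂ M.X + M.act.l a
  let R : A → M.X →L[ℂ] M.X := fun a => ContinuousLinearMap.id ℂ M.X + M.act.r a
  have hP : ∀ a x, P a x = x + M.act.l a x := fun _ _ => rfl
  have hR : ∀ a x, R a x = x + M.act.r a x := fun _ _ => rfl
  have hPP : ∀ a, QU a → ∀ x, P (star a) (P a x) = x := fun a ha x => by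
    have h := congrArg (fun z => M.act.l z x) ha.2
    simp only [map_add, add_apply, M.act.l_mul, map_zero, zero_apply] at h
    simp only [hP, map_add]
    rw [← sub_eq_zero, ← h]; abel
  have hRR : ∀ a, QU a → ∀ x, R a (R (star a) x) = x := fun a ha x => by
    have h := congrArg (fun z => M.act.r z x) ha.2
    simp only [map_add, add_apply, M.act.r_mul, map_zero, zero_apply] at h
    simp only [hR, map_add]
    rw [← sub_eq_zero, ← h]; abel
  have hPn : ∀ a, QU a → ∀ x, ‖P a x‖ = ‖x‖ := fun a ha x =>
    le_antisymm (hM a ha x).1 (by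
      conv_lhs => rw [← hPP a ha x]
      exact (hM _ ha.star _).1)
  have hRn : ∀ a, QU a → ∀ x, ‖R (star a) x‖ = ‖x‖ := fun a ha x =>
    le_antisymm (hM _ ha.star x).2 (by
      conv_lhs => rw [← hRR a ha x]
      exact (hM _ ha _).2)
  let β : A → M.X := fun a => R (star a) (D a)
  have hcoc : ∀ a a', QU a' → R (star a) (P a (β a')) + β a = β (a + a' + a * a') := by
    intro a a' ha'
    have h := congrArg (fun z => M.act.r z (D a)) ha'.1
    simp only [map_add, add_apply, M.act.r_mul, map_zero, zero_apply] at h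
    have h2 := congrArg (fun z => M.act.r (star a) z) h
    simp only [map_add, map_zero] at h2
    simp only [β, hP, hR, map_add, hD a a', star_add, star_mul, add_apply, M.act.r_mul, M.act.lr]
    rw [← sub_eq_zero, ← neg_eq_zero]
    refine Eq.trans ?_ ((congrArg₂ (· + ·) h h2).trans (add_zero (0 : M.X)))
    abel
  obtain ⟨f, hf⟩ := lf_fix hLE (ι := ι) (fun i => (R (star i.1)).comp (P i.1)) (fun i => β i.1)
    (fun i x => by
      rw [ContinuousLinearMap.comp_apply, hRn _ i.2, hPn _ i.2])
    {z | ∃ a, QU a ∧ β a = z} ⟨β 0, 0, qu_zero, rfl⟩ (‖D‖ * 2) (by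
      rintro _ ⟨a, ha, rfl⟩
      simp only [β]
      rw [hRn a ha]
      refine (D.le_opNorm a).trans ?_
      gcongr
      exact ha.norm_le) (by
      rintro ⟨a, ha⟩ _ ⟨c, hc, rfl⟩
      have hq := QU.comp ha.star hc
      refine ⟨_, ⟨_, hq, rfl⟩, ?_⟩
      rw [ContinuousLinearMap.comp_apply, hcoc a _ hq]
      congr 1
      have : a + (star a + c + star a * c) + a * (star a + c + star a * c) =
        c + (a + star a + a * star a) + (a + star a + a * star a) * c := by noncomm_ring
      rw [this, ha.1]; simp)
  refine ⟨-f, fun a ha => ?_⟩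
  have h1 := congrArg (R a) (hf ⟨a, ha⟩)
  simp only [β, ContinuousLinearMap.comp_apply, map_add (R a)] at h1
  rw [hRR a ha, hRR a ha, hP, hR, add_assoc] at h1
  have h2 := add_left_cancel h1
  rw [map_neg, map_neg, ← h2]
  abel

lemma qu_of_sa (h : A) (hh : IsSelfAdjoint h) (hn : ‖h‖ ≤ 1) :
    ∃ k : A, QU (k + Complex.I • h) ∧ QU (k - Complex.I • h) := by
  let g : ℝ → ℝ := fun t => Real.sqrt (1 - t ^ 2) - 1
  have hg : Continuous g := by fun_prop
  have hg0 : g 0 = 0 := by simp [g]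
  have hk : IsSelfAdjoint (cfcₙ g h) := cfcₙ_predicate g h
  set k := cfcₙ g h with hkdef
  have hc1 : h * k = cfcₙ (fun t => t * g t) h := by
    rw [cfcₙ_mul (fun t => t) g h (by fun_prop) rfl hg.continuousOn hg0, cfcₙ_id' ℝ h]
  have hc2 : k * h = cfcₙ (fun t => t * g t) h := by
    rw [show (fun t => t * g t) = fun t => g t * t by funext t; ring,
      cfcₙ_mul g (fun t => t) h hg.continuousOn hg0 (by fun_prop) rfl, cfcₙ_id' ℝ h]
  have hc : h * k = k * h := hc1.trans hc2.symm
  have hz : k + k + k * k + h * h = 0 := by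
    have e : k + k + k * k + h * h = cfcₙ (fun t => g t + g t + g t * g t + t * t) h := by
      rw [cfcₙ_add (fun t => g t + g t + g t * g t) (fun t => t * t) h (by fun_prop)
          (by simp [hg0]) (by fun_prop) (by simp),
        cfcₙ_add (fun t => g t + g t) (fun t => g t * g t) h (by fun_prop)
          (by simp [hg0]) (by fun_prop) (by simp [hg0]),
        cfcₙ_add g g h (by fun_prop) hg0 (by fun_prop) hg0,
        cfcₙ_mul g g h (by fun_prop) hg0 (by fun_prop) hg0,
        cfcₙ_mul (fun t => t) (fun t => t) h (by fun_prop) rfl (by fun_prop) rfl, cfcₙ_id' ℝ h]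
    rw [e]
    have : cfcₙ (fun t => g t + g t + g t * g t + t * t) h = cfcₙ (fun _ => (0 : ℝ)) h := by
      refine cfcₙ_congr fun t ht => ?_
      have ht1 : |t| ≤ 1 := by
        have := NonUnitalIsometricContinuousFunctionalCalculus.norm_quasispectrum_le h ht hh
        rw [Real.norm_eq_abs] at this
        exact this.trans hn
      have : Real.sqrt (1 - t ^ 2) ^ 2 = 1 - t ^ 2 := Real.sq_sqrt (by
        nlinarith [sq_abs t, abs_nonneg t])
      simp only [g]
      nlinarith
    rw [this, cfcₙ_const_zero]
  have e1 : star (k + Complex.I • h) = k - Complex.I • h := by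
    rw [star_add, star_smul, hk.star_eq, hh.star_eq]
    simp [sub_eq_add_neg]
  have m1 : (k + Complex.I • h) * (k - Complex.I • h) = k * k + h * h := by
    simp only [add_mul, mul_sub, smul_mul_assoc, mul_smul_comm, hc]
    rw [smul_add, smul_smul, Complex.I_mul_I, neg_one_smul]
    abel
  have m2 : (k - Complex.I • h) * (k + Complex.I • h) = k * k + h * h := by
    simp only [mul_add, sub_mul, smul_mul_assoc, mul_smul_comm, hc]
    rw [smul_sub, smul_smul, Complex.I_mul_I, neg_one_smul]
    abel
  have q : QU (k + Complex.I • h) := by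
    constructor
    · rw [e1, m1, ← hz]; abel
    · rw [e1, m2, ← hz]; abel
  exact ⟨k, q, e1 ▸ q.star⟩

lemma lin_zero {X : Type u} [AddCommGroup X] [Module ℂ X] (E : A →ₗ[ℂ] X)
    (hE : ∀ a, QU a → E a = 0) (a : A) : E a = 0 := by
  have h1 : ∀ h : A, IsSelfAdjoint h → ‖h‖ ≤ 1 → E h = 0 := fun h hh hn => by
    obtain ⟨k, q1, q2⟩ := qu_of_sa h hh hn
    have e1 := hE _ q1
    have e2 := hE _ q2
    rw [map_add] at e1
    rw [map_sub] at e2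
    have e3 : (2 * Complex.I) • E h = 0 := by
      rw [mul_smul, two_smul, ← map_smul]
      have : E (Complex.I • h) + E (Complex.I • h) =
        (E k + E (Complex.I • h)) - (E k - E (Complex.I • h)) := by abel
      rw [this, e1, e2, sub_zero]
    exact (smul_eq_zero.mp e3).resolve_left (by simp)
  have h2 : ∀ h : A, IsSelfAdjoint h → E h = 0 := fun h hh => by
    by_cases h0 : ‖h‖ = 0
    · rw [norm_eq_zero.mp h0, map_zero]
    · have := h1 ((‖h‖⁻¹ : ℝ) • h) ((IsSelfAdjoint.all _).smul hh) (by
        rw [norm_smul, norm_inv, norm_norm, inv_mul_cancel₀ h0])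
      rw [← Complex.coe_smul, map_smul] at this
      exact (smul_eq_zero.mp this).resolve_left (by simpa using h0)
  rw [← realPart_add_I_smul_imaginaryPart a, map_add, map_smul, h2 _ (realPart a).2,
    h2 _ (imaginaryPart a).2]
  simp

lemma final_core {M : BMod A} (hM : Ctr M)
    (hLE : ∀ c : Dl (Dl M.X), ∃ v : M.X, ∀ a : M.X,
      ‖v - a‖ + ‖c - inclDD M.X v‖ ≤ ‖c - inclDD M.X a‖) : H1Zero M := by
  intro D hD
  obtain ⟨x, hx⟩ := qu_inner hM hLE D hD
  refine ⟨x, fun a => ?_⟩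
  have := lin_zero ((D - (M.act.l.flip x - M.act.r.flip x) : A →L[ℂ] M.X) : A →ₗ[ℂ] M.X)
    (fun a ha => by simp [hx a ha]) a
  simpa [sub_eq_zero] using this

lemma cst_iter (M : BMod A) (h : CstP M.X) : ∀ k : ℕ, CstP (M.iter (2 * k)).X
  | 0 => h
  | k + 1 => (cst_iter M h k).dd

theorem final_thm (k : ℕ) : NIdeallyAmenable A (2 * k + 1) := by
  intro I
  refine final_core ((ctr_ideal I).iter _) ?_
  exact (cst_iter I.toBMod (ideal_cst I.car I.isClosed I.mul_mem_left I.mul_mem_right) k).le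

end FinalSec

/-- **Theorem 4.2.** Every C*-algebra is `(2k+1)`-ideally amenable for every
`k ≥ 0`. -/
theorem cstar_odd_ideally_amenable
    {A : Type u} [NonUnitalNormedRing A] [StarRing A] [CStarRing A]
    [NormedSpace ℂ A] [IsScalarTower ℂ A A] [SMulCommClass ℂ A A] [StarModule ℂ A]
    [CompleteSpace A]
    (k : ℕ) :
    NIdeallyAmenable A (2 * k + 1) := by
  letI : NonUnitalCStarAlgebra A := {}
  exact final_thm k
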